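/- arXiv:2504.15555 — 8 statements merged into one kernel-verified Lean document; each statement's English description precedes it below -/
import Mathlib

section
/- Let n ≥ 2 be an integer and let f be a continuous probability density on [0,1] with f(q) > 0 for q ∈ (0,1]. Let p_1,…,p_n : [0,1]^n → [0,1] be measurable functions with ∑_{s=1}^n p_s(q) ≤ 1 for all q ∈ [0,1]^n, and for each s define the interim allocation P_s(x) = ∫_{[0,1]^{n-1}} p_s(x, q_{-s}) ∏_{k≠s} f(q_k) dq_{-s}. Then there exist integrable transfer functions t_1,…,t_n : [0,1]^n → ℝ such that the mechanism is incentive-compatible — i.e., writing T_s(x) = ∫_{[0,1]^{n-1}} t_s(x, q_{-s}) ∏_{k≠s} f(q_k) dq_{-s}, for every s, every x' ∈ [0,1] and almost every x ∈ [0,1] one has T_s(x) − x·P_s(x) ≥ T_s(x') − x·P_s(x') — if and only if for each s the function P_s agrees almost everywhere on [0,1] with a nonincreasing function. -/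
open MeasureTheory Set

/-- The product measure on `[0,1]^n` (uniform on each coordinate); densities are
multiplied explicitly in the integrands below. -/
noncomputable def pimeas (n : ℕ) : Measure (Fin n → ℝ) :=
  Measure.pi fun _ => volume.restrict (Icc (0:ℝ) 1)

lemma ic_forall_of_ae (T P : ℝ → ℝ)
    (h : ∀ x' ∈ Icc (0:ℝ) 1, ∀ᵐ x ∂(volume.restrict (Icc (0:ℝ) 1)),
      T x' - x * P x' ≤ T x - x * P x) :
    ∀ᵐ x ∂(volume.restrict (Icc (0:ℝ) 1)), ∀ x' ∈ Icc (0:ℝ) 1,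
      T x' - x * P x' ≤ T x - x * P x := by
  let g : ℝ → ℝ × ℝ := fun x => (T x, P x)
  obtain ⟨c, hcs, hcc, hcd⟩ :=
    (TopologicalSpace.IsSeparable.of_separableSpace (g '' Icc (0:ℝ) 1)).exists_countable_dense_subset
  have h2 : ∀ᵐ x ∂(volume.restrict (Icc (0:ℝ) 1)), ∀ y ∈ c,
      y.1 - x * y.2 ≤ T x - x * P x := by
    rw [ae_ball_iff hcc]
    intro y hy
    obtain ⟨x', hx', rfl⟩ := hcs hy
    exact h x' hx'
  filter_upwards [h2] with x hx x' hx'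
  have hcl : IsClosed {y : ℝ × ℝ | y.1 - x * y.2 ≤ T x - x * P x} :=
    isClosed_le (by fun_prop) continuous_const
  exact closure_minimal (fun y hy => hx y hy) hcl (hcd ⟨x', hx', rfl⟩)

lemma antitone_of_ic (T P : ℝ → ℝ) (C : ℝ) (hb : ∀ x, |P x| ≤ C)
    (h : ∀ x' ∈ Icc (0:ℝ) 1, ∀ᵐ x ∂(volume.restrict (Icc (0:ℝ) 1)),
      T x' - x * P x' ≤ T x - x * P x) :
    ∃ Q : ℝ → ℝ, AntitoneOn Q (Icc (0:ℝ) 1) ∧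
        ∀ᵐ x ∂(volume.restrict (Icc (0:ℝ) 1)), P x = Q x := by
  have h2 := ic_forall_of_ae T P h
  let G : Set ℝ := {x | x ∈ Icc (0:ℝ) 1 ∧ ∀ x' ∈ Icc (0:ℝ) 1,
      T x' - x * P x' ≤ T x - x * P x}
  have hG : AntitoneOn P G := by
    intro a ha b hb hab
    rcases hab.eq_or_lt with rfl | hab
    · exact le_rfl
    have h1 := ha.2 b hb.1
    have h3 := hb.2 a ha.1
    by_contra! hlt
    nlinarith
  obtain ⟨Q, hQ, hPQ⟩ := hG.exists_antitone_extension
    ⟨-C, by rintro _ ⟨x, -, rfl⟩; exact (abs_le.1 (hb x)).1⟩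
    ⟨C, by rintro _ ⟨x, -, rfl⟩; exact (abs_le.1 (hb x)).2⟩
  refine ⟨Q, hQ.antitoneOn _, ?_⟩
  filter_upwards [h2, ae_restrict_mem measurableSet_Icc] with x hx hxm
  exact hPQ ⟨hxm, hx⟩

lemma transfer_exists (f P Q : ℝ → ℝ) (hf : IntegrableOn f (Icc (0:ℝ) 1))
    (hP : ∀ x, 0 ≤ P x)
    (hQ0 : AntitoneOn Q (Icc (0:ℝ) 1))
    (hPQ0 : ∀ᵐ x ∂(volume.restrict (Icc (0:ℝ) 1)), P x = Q x) :
    ∃ T : ℝ → ℝ, IntegrableOn (fun x => T x * f x) (Icc (0:ℝ) 1) ∧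
      ∀ x' ∈ Icc (0:ℝ) 1, ∀ᵐ x ∂(volume.restrict (Icc (0:ℝ) 1)),
      T x' - x * P x' ≤ T x - x * P x := by
  classical
  have h0m : (0:ℝ) ∈ Icc (0:ℝ) 1 := by simp
  have h1m : (1:ℝ) ∈ Icc (0:ℝ) 1 := by simp
  obtain ⟨R, hR, hQR⟩ := hQ0.exists_antitone_extension
    ⟨Q 1, by rintro _ ⟨x, hx, rfl⟩; exact hQ0 hx h1m hx.2⟩
    ⟨Q 0, by rintro _ ⟨x, hx, rfl⟩; exact hQ0 h0m hx hx.1⟩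
  have hPR : ∀ᵐ x ∂(volume.restrict (Icc (0:ℝ) 1)), P x = R x := by
    filter_upwards [hPQ0, ae_restrict_mem measurableSet_Icc] with x hx hxm
    rw [hx, hQR hxm]
  have hint : ∀ a b, IntervalIntegrable R volume a b := fun a b =>
    (hR.antitoneOn _).intervalIntegrable
  have hU : Continuous (fun x => ∫ y in x..1, R y) := by
    have := intervalIntegral.continuous_primitive hint 1
    have h2 : (fun x => ∫ y in x..1, R y) = fun x => -∫ y in (1:ℝ)..x, R y := by
      funext x; exact intervalIntegral.integral_symm _ _
    rw [h2]; exact this.neg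
  obtain ⟨M, hM⟩ := (isCompact_Icc (a := (0:ℝ)) (b := 1)).exists_bound_of_continuousOn hU.continuousOn
  let H : ℝ → ℝ := fun x => x * R x + ∫ y in x..1, R y
  let T : ℝ → ℝ := fun x => if P x = R x then H x else -M
  have hTH : ∀ᵐ x ∂(volume.restrict (Icc (0:ℝ) 1)), T x = H x := by
    filter_upwards [hPR] with x hx
    simp [T, hx]
  refine ⟨T, ?_, ?_⟩
  · have hHm : Measurable H := (measurable_id.mul hR.measurable).add hU.measurable
    have : IntegrableOn (fun x => H x * f x) (Icc (0:ℝ) 1) := by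
      refine Integrable.bdd_mul (c := (|R 0| + |R 1|) + M) hf hHm.aestronglyMeasurable ?_
      filter_upwards [ae_restrict_mem measurableSet_Icc] with x hx
      have h1 := hM x hx
      rw [Real.norm_eq_abs] at *
      have h2 : |R x| ≤ |R 0| + |R 1| := by
        have a1 := hR hx.1
        have a2 := hR hx.2
        rw [abs_le]
        constructor
        · linarith [neg_abs_le (R 1), abs_nonneg (R 0)]
        · linarith [le_abs_self (R 0), abs_nonneg (R 1)]
      have h3 : |x * R x| ≤ |R x| := by
        rw [abs_mul, abs_of_nonneg hx.1]
        exact mul_le_of_le_one_left (abs_nonneg _) hx.2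
      exact (abs_add_le _ _).trans (by linarith)
    refine this.congr ?_
    filter_upwards [hTH] with x hx
    rw [hx]
  · intro x' hx'
    filter_upwards [hPR, hTH, ae_restrict_mem measurableSet_Icc] with x hx hT hxm
    rw [hT, hx]
    have hMx := (abs_le.1 (hM x hxm)).1
    by_cases hb : P x' = R x'
    · have key : (x' - x) * R x' ≤ ∫ y in x..x', R y := by
        rcases le_total x x' with hle | hle
        · have := intervalIntegral.integral_mono_on hle
            (intervalIntegrable_const (c := R x')) (hint x x') (fun y hy => hR hy.2)
          simpa using this
        · have := intervalIntegral.integral_mono_on hle (hint x' x)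
            (intervalIntegrable_const (c := R x')) (fun y hy => hR hy.1)
          rw [intervalIntegral.integral_symm]
          simp at this
          linarith
      have hadd := intervalIntegral.integral_add_adjacent_intervals (hint x x') (hint x' 1)
      simp only [T, H, hb, if_true]
      linarith
    · simp only [T, H, hb, if_false]
      have := mul_nonneg hxm.1 (hP x')
      linarith

/-- For a feasible allocation rule `p` with interim allocations `P s`,
there exist integrable transfers making the mechanism incentive-compatible if and only
if each interim allocation `P s` agrees almost everywhere on `[0,1]` with a
nonincreasing function. -/
theorem stmt_0 (n : ℕ) (hn : 2 ≤ n)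
    (f : ℝ → ℝ)
    (hf_cont : ContinuousOn f (Icc 0 1))
    (hf_nonneg : ∀ q ∈ Icc (0:ℝ) 1, 0 ≤ f q)
    (hf_pos : ∀ q ∈ Ioc (0:ℝ) 1, 0 < f q)
    (hf_prob : (∫ q in (0:ℝ)..1, f q) = 1)
    (p : Fin n → (Fin n → ℝ) → ℝ)
    (hp_meas : ∀ s, Measurable (p s))
    (hp_mem : ∀ s q, p s q ∈ Icc (0:ℝ) 1)
    (hp_sum : ∀ q : Fin n → ℝ, (∀ k, q k ∈ Icc (0:ℝ) 1) → (∑ s, p s q) ≤ 1)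
    (P : Fin n → ℝ → ℝ)
    (hP : ∀ s x, P s x =
      ∫ q : Fin n → ℝ,
        p s (Function.update q s x) * ∏ k ∈ Finset.univ.erase s, f (q k) ∂(pimeas n)) :
    (∃ t : Fin n → (Fin n → ℝ) → ℝ,
      (∀ s, Integrable (fun q => t s q * ∏ k, f (q k)) (pimeas n)) ∧
      (∀ s : Fin n, ∀ x' ∈ Icc (0:ℝ) 1,
        ∀ᵐ x ∂(volume.restrict (Icc (0:ℝ) 1)),
          (∫ q : Fin n → ℝ,
              t s (Function.update q s x') * ∏ k ∈ Finset.univ.erase s, f (q k) ∂(pimeas n))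
            - x * P s x'
          ≤ (∫ q : Fin n → ℝ,
              t s (Function.update q s x) * ∏ k ∈ Finset.univ.erase s, f (q k) ∂(pimeas n))
            - x * P s x))
    ↔ ∀ s : Fin n, ∃ Q : ℝ → ℝ, AntitoneOn Q (Icc (0:ℝ) 1) ∧
        ∀ᵐ x ∂(volume.restrict (Icc (0:ℝ) 1)), P s x = Q x := by
  have hfi : Integrable f (volume.restrict (Icc (0:ℝ) 1)) := hf_cont.integrableOn_compact isCompact_Icc
  have hf1 : ∫ q in Icc (0:ℝ) 1, f q = 1 := by
    rw [integral_Icc_eq_integral_Ioc, ← intervalIntegral.integral_of_le zero_le_one, hf_prob]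
  have hprodeq : ∀ s : Fin n, (fun q : Fin n → ℝ => ∏ k ∈ Finset.univ.erase s, f (q k))
      = fun q => ∏ k, (if k = s then (fun _ => (1:ℝ)) else f) (q k) := by
    intro s
    funext q
    rw [← Finset.mul_prod_erase Finset.univ _ (Finset.mem_univ s)]
    simp only [if_true, one_mul]
    refine Finset.prod_congr rfl fun k hk => ?_
    rw [if_neg (Finset.ne_of_mem_erase hk)]
  have hEint : ∀ s : Fin n, Integrable (fun q : Fin n → ℝ => ∏ k ∈ Finset.univ.erase s, f (q k))
      (pimeas n) := by
    intro s
    rw [hprodeq]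
    refine Integrable.fintype_prod (f := fun k => if k = s then (fun _ => (1:ℝ)) else f) fun k => ?_
    split_ifs
    · exact integrable_const _
    · exact hfi
  have hE1 : ∀ s : Fin n, ∫ q : Fin n → ℝ, ∏ k ∈ Finset.univ.erase s, f (q k) ∂(pimeas n) = 1 := by
    intro s
    rw [hprodeq, pimeas,
      integral_fintype_prod_eq_prod (f := fun k => if k = s then (fun _ => (1:ℝ)) else f)]
    refine Finset.prod_eq_one fun k _ => ?_
    split_ifs
    · simp
    · exact hf1
  have hmem : ∀ᵐ q ∂(pimeas n), ∀ k, q k ∈ Icc (0:ℝ) 1 := by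
    rw [ae_all_iff]
    intro k
    exact (Measure.quasiMeasurePreserving_eval (fun _ : Fin n => volume.restrict (Icc (0:ℝ) 1)) k).ae
      (ae_restrict_mem measurableSet_Icc)
  have hEnn : ∀ s : Fin n, ∀ᵐ q ∂(pimeas n), 0 ≤ ∏ k ∈ Finset.univ.erase s, f (q k) := by
    intro s
    filter_upwards [hmem] with q hq
    exact Finset.prod_nonneg fun k _ => hf_nonneg _ (hq k)
  have hP0 : ∀ s x, 0 ≤ P s x := by
    intro s x
    rw [hP]
    refine integral_nonneg_of_ae ?_
    filter_upwards [hEnn s] with q hq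
    exact mul_nonneg (hp_mem _ _).1 hq
  have hP1 : ∀ s x, P s x ≤ 1 := by
    intro s x
    rw [hP, ← hE1 s]
    refine integral_mono_of_nonneg ?_ (hEint s) ?_
    · filter_upwards [hEnn s] with q hq
      exact mul_nonneg (hp_mem _ _).1 hq
    · filter_upwards [hEnn s] with q hq
      exact mul_le_of_le_one_left hq (hp_mem _ _).2
  constructor
  · rintro ⟨t, -, hic⟩ s
    exact antitone_of_ic (fun x => ∫ q : Fin n → ℝ,
        t s (Function.update q s x) * ∏ k ∈ Finset.univ.erase s, f (q k) ∂(pimeas n)) (P s) 1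
      (fun x => abs_le.2 ⟨by linarith [hP0 s x], hP1 s x⟩) (hic s)
  · intro h
    choose Q hQ hPQ using h
    choose T hTi hT using fun s => transfer_exists f (P s) (Q s) hfi (hP0 s) (hQ s) (hPQ s)
    refine ⟨fun s q => T s (q s), fun s => ?_, fun s x' hx' => ?_⟩
    · have he : (fun q : Fin n → ℝ => T s (q s) * ∏ k, f (q k))
          = fun q => ∏ k, (if k = s then (fun x => T s x * f x) else f) (q k) := by
        funext q
        rw [← Finset.mul_prod_erase Finset.univ _ (Finset.mem_univ s),
          ← Finset.mul_prod_erase Finset.univ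
            (fun k => (if k = s then (fun x => T s x * f x) else f) (q k)) (Finset.mem_univ s)]
        simp only [if_true, ← mul_assoc]
        congr 1
        refine Finset.prod_congr rfl fun k hk => ?_
        rw [if_neg (Finset.ne_of_mem_erase hk)]
      rw [he]
      refine Integrable.fintype_prod
        (f := fun k => if k = s then (fun x => T s x * f x) else f) fun k => ?_
      split_ifs
      · exact hTi s
      · exact hfi
    · simp only [Function.update_self, integral_const_mul, hE1, mul_one]
      exact hT s x' hx'
end

section
/- Let n ≥ 2 be an integer and let P : [0,1] → [0,1] be a nonincreasing function. Then there exist measurable functions p_1,…,p_n : [0,1]^n → [0,1] with ∑_{s=1}^n p_s(x_1,…,x_n) ≤ 1 for all (x_1,…,x_n) ∈ [0,1]^n such that for each s and almost every x ∈ [0,1], ∫_{[0,1]^{n-1}} p_s(x, x_{-s}) dx_{-s} = P(x), if and only if ∫_0^t P(s) ds ≤ ∫_0^t (1−s)^{n−1} ds = (1 − (1−t)^n)/n for every t ∈ [0,1]. -/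
open MeasureTheory Set

/-- uniform measure on the unit interval -/
noncomputable def uni : Measure ℝ := volume.restrict (Icc (0:ℝ) 1)

instance uni_prob : IsProbabilityMeasure uni := ⟨by simp [uni]⟩

instance pimeas_prob (n : ℕ) : IsProbabilityMeasure (pimeas n) := by
  have : IsProbabilityMeasure (Measure.pi fun _ : Fin n => uni) := inferInstance
  exact this

/-- generalized inverse of the primitive of a density -/
lemma quant (f : ℝ → ℝ) (hm : Measurable f) (h0 : ∀ x, 0 ≤ f x) (h1 : ∀ x, f x ≤ 1) :
    ∃ α : ℝ → ℝ, Measurable α ∧ (∀ w, α w ∈ Icc (0:ℝ) 1) ∧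
      (∀ w ∈ Ioc (0:ℝ) (∫ x in (0:ℝ)..1, f x), (∫ x in (0:ℝ)..(α w), f x) = w ∧
        ∀ t ∈ Icc (0:ℝ) 1, α w ≤ t ↔ w ≤ ∫ x in (0:ℝ)..t, f x) ∧
      Measure.map α (volume.restrict (Ioc (0:ℝ) (∫ x in (0:ℝ)..1, f x))) =
        uni.withDensity (fun x => ENNReal.ofReal (f x)) := by
  have hInt : ∀ a b : ℝ, IntervalIntegrable f volume a b := by
    intro a b
    refine (intervalIntegrable_const (c := (1:ℝ))).mono_fun hm.aestronglyMeasurable ?_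
    refine Filter.Eventually.of_forall fun x => ?_
    simp only [Real.norm_eq_abs, abs_of_nonneg (h0 x)]
    simpa using h1 x
  set F : ℝ → ℝ := fun t => ∫ x in (0:ℝ)..t, f x with hF
  have hFc : Continuous F := intervalIntegral.continuous_primitive hInt 0
  have hFm : Monotone F := by
    intro a b hab
    have : F b - F a = ∫ x in a..b, f x := intervalIntegral.integral_interval_sub_left (hInt _ _) (hInt _ _)
    have h2 : 0 ≤ ∫ x in a..b, f x := intervalIntegral.integral_nonneg hab fun x _ => h0 x
    linarith
  have hF0 : F 0 = 0 := by simp [hF]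
  change ∃ α : ℝ → ℝ, Measurable α ∧ (∀ w, α w ∈ Icc (0:ℝ) 1) ∧
      (∀ w ∈ Ioc (0:ℝ) (F 1), F (α w) = w ∧
        ∀ t ∈ Icc (0:ℝ) 1, α w ≤ t ↔ w ≤ F t) ∧
      Measure.map α (volume.restrict (Ioc (0:ℝ) (F 1))) = _
  let S : ℝ → Set ℝ := fun w => {t | t ∈ Icc (0:ℝ) 1 ∧ min w (F 1) ≤ F t}
  have hSne : ∀ w, (S w).Nonempty := fun w => ⟨1, by simp, min_le_right _ _⟩
  have hSbd : ∀ w, BddBelow (S w) := fun w => ⟨0, fun t ht => ht.1.1⟩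
  have hScl : ∀ w, IsClosed (S w) := fun w =>
    isClosed_Icc.inter (isClosed_le continuous_const hFc)
  have hmem : ∀ w, sInf (S w) ∈ S w := fun w => (hScl w).csInf_mem (hSne w) (hSbd w)
  have hmono : Monotone (fun w => sInf (S w)) := by
    intro a b hab
    refine csInf_le_csInf (hSbd a) (hSne b) fun t ht => ⟨ht.1, le_trans ?_ ht.2⟩
    exact min_le_min_right _ hab
  have hgal : ∀ w ∈ Ioc (0:ℝ) (F 1), ∀ t ∈ Icc (0:ℝ) 1, sInf (S w) ≤ t ↔ w ≤ F t := by
    intro w hw t ht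
    constructor
    · intro h
      have := (hmem w).2
      rw [min_eq_left hw.2] at this
      exact this.trans (hFm h)
    · intro h
      exact csInf_le (hSbd w) ⟨ht, by rwa [min_eq_left hw.2]⟩
  refine ⟨fun w => sInf (S w), hmono.measurable, fun w => (hmem w).1, ?_, ?_⟩
  · intro w hw
    refine ⟨?_, hgal w hw⟩
    have h2 := (hmem w).2
    rw [min_eq_left hw.2] at h2
    refine le_antisymm ?_ h2
    obtain ⟨t, ht, htw⟩ := intermediate_value_Icc (zero_le_one' ℝ) hFc.continuousOn
      (show w ∈ Icc (F 0) (F 1) from ⟨by rw [hF0]; exact hw.1.le, hw.2⟩)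
    have := hFm ((hgal w hw t ht).2 htw.ge)
    linarith
  · have hfin : IsFiniteMeasure (uni.withDensity (fun x => ENNReal.ofReal (f x))) := by
      refine isFiniteMeasure_withDensity_ofReal ?_
      refine HasFiniteIntegral.of_bounded (C := 1) (Filter.Eventually.of_forall fun x => ?_)
      simpa [abs_of_nonneg (h0 x)] using h1 x
    have hfin2 : IsFiniteMeasure (Measure.map (fun w => sInf (S w)) (volume.restrict (Ioc (0:ℝ) (F 1)))) := inferInstance
    refine Measure.ext_of_Iic _ _ fun a => ?_
    rw [Measure.map_apply hmono.measurable measurableSet_Iic,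
      Measure.restrict_apply (hmono.measurable measurableSet_Iic),
      withDensity_apply _ measurableSet_Iic, uni, Measure.restrict_restrict measurableSet_Iic]
    rcases lt_or_ge a 0 with ha | ha
    · have e1 : (fun w => sInf (S w)) ⁻¹' Iic a ∩ Ioc 0 (F 1) = ∅ := by
        ext w; simp only [mem_inter_iff, mem_preimage, mem_Iic, mem_empty_iff_false, iff_false]
        rintro ⟨h, -⟩
        have := (hmem w).1.1
        linarith
      have e2 : Iic a ∩ Icc (0:ℝ) 1 = ∅ := by
        ext w; simp only [mem_inter_iff, mem_Icc, mem_Iic, mem_empty_iff_false, iff_false]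
        rintro ⟨h, h', -⟩
        linarith
      rw [e1, e2]; simp
    · have ht : min a 1 ∈ Icc (0:ℝ) 1 := ⟨le_min ha zero_le_one, min_le_right _ _⟩
      have e1 : (fun w => sInf (S w)) ⁻¹' Iic a ∩ Ioc 0 (F 1) = Ioc 0 (F (min a 1)) := by
        ext w; simp only [mem_inter_iff, mem_preimage, mem_Iic]
        constructor
        · rintro ⟨h, hw⟩
          exact ⟨hw.1, (hgal w hw _ ht).1 (le_min h (hmem w).1.2)⟩
        · intro hw
          have hw' : w ∈ Ioc 0 (F 1) := ⟨hw.1, hw.2.trans (hFm ht.2)⟩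
          exact ⟨((hgal w hw' _ ht).2 hw.2).trans (min_le_left _ _), hw'⟩
      have e2 : Iic a ∩ Icc (0:ℝ) 1 = Icc 0 (min a 1) := by
        ext w; simp only [mem_inter_iff, mem_Icc, mem_Iic, le_min_iff]; tauto
      rw [e1, e2, Real.volume_Ioc, sub_zero]
      simp only [hF]
      rw [intervalIntegral.integral_of_le ht.1, ← ofReal_integral_eq_lintegral_ofReal, integral_Icc_eq_integral_Ioc]
      · have := (hInt 0 (min a 1)).1
        exact (integrableOn_Icc_iff_integrableOn_Ioc).2 this
      · exact Filter.Eventually.of_forall h0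

/-- change of variables for a density and its quantile map -/
lemma quant_lint {f α : ℝ → ℝ} (hm : Measurable f) (hα : Measurable α) {L : Measure ℝ}
    (h : Measure.map α L = uni.withDensity (fun x => ENNReal.ofReal (f x)))
    (u : ℝ → ENNReal) (hu : Measurable u) :
    ∫⁻ x, ENNReal.ofReal (f x) * u x ∂uni = ∫⁻ w, u (α w) ∂L := by
  rw [← lintegral_map hu hα, h, lintegral_withDensity_eq_lintegral_mul _ hm.ennreal_ofReal hu]
  rfl

lemma quant_ae {f α : ℝ → ℝ} (hm : Measurable f) (hα : Measurable α) {L : Measure ℝ}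
    (h : Measure.map α L = uni.withDensity (fun x => ENNReal.ofReal (f x))) :
    ∀ᵐ w ∂L, 0 < f (α w) := by
  have : ∀ᵐ x ∂(Measure.map α L), 0 < f x := by
    rw [h, ae_withDensity_iff hm.ennreal_ofReal]
    refine Filter.Eventually.of_forall fun x hx => ?_
    simpa using hx
  exact ae_of_ae_map hα.aemeasurable this

lemma quant_ae' {f α : ℝ → ℝ} (hm : Measurable f) (hα : Measurable α) {L : Measure ℝ}
    (h : Measure.map α L = uni.withDensity (fun x => ENNReal.ofReal (f x)))
    {q : ℝ → Prop} (hq : MeasurableSet {x | q x}) (hL : ∀ᵐ w ∂L, q (α w)) :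
    ∀ᵐ x ∂uni, 0 < f x → q x := by
  have : ∀ᵐ x ∂(Measure.map α L), q x := (ae_map_iff hα.aemeasurable hq).2 hL
  rw [h, ae_withDensity_iff hm.ennreal_ofReal] at this
  filter_upwards [this] with x hx hx0
  exact hx (by simpa using hx0)

lemma exch (P G : ℝ → ℝ) (hP : Antitone P) (hG : Antitone G)
    (hP01 : ∀ x, P x ∈ Icc (0:ℝ) 1) (hG01 : ∀ x, G x ∈ Icc (0:ℝ) 1)
    (hmaj : ∀ t ∈ Icc (0:ℝ) 1, (∫ x in (0:ℝ)..t, P x) ≤ ∫ x in (0:ℝ)..t, G x) :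
    ∃ l r : ℝ → ℝ, Measurable l ∧ Measurable r ∧ (∀ x, l x ∈ Icc (0:ℝ) 1) ∧
      (∀ x, r x ∈ Icc (0:ℝ) 1) ∧
      (∀ u : ℝ → ENNReal, Measurable u → ∫⁻ x, ENNReal.ofReal (l x) * u (r x) ∂uni =
        ∫⁻ x, ENNReal.ofReal (l x) * u x ∂uni) ∧
      ∀ᵐ x ∂uni, P x ≤ (1 - l x) * G x + l x * G (r x) := by
  have hPm : Measurable P := hP.measurable
  have hGm : Measurable G := hG.measurable
  have hbd : ∀ d : ℝ → ℝ, Measurable d → (∀ x, 0 ≤ d x) → (∀ x, d x ≤ 1) →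
      ∀ a b : ℝ, IntervalIntegrable d volume a b := by
    intro d hd h0 h1 a b
    refine (intervalIntegrable_const (c := (1:ℝ))).mono_fun hd.aestronglyMeasurable ?_
    refine Filter.Eventually.of_forall fun x => ?_
    simp only [Real.norm_eq_abs, abs_of_nonneg (h0 x)]
    simpa using h1 x
  let d : ℝ → ℝ := fun x => max (G x - P x) 0
  let g : ℝ → ℝ := fun x => max (P x - G x) 0
  have hdm : Measurable d := (hGm.sub hPm).max measurable_const
  have hgm : Measurable g := (hPm.sub hGm).max measurable_const
  have hd0 : ∀ x, 0 ≤ d x := fun x => le_max_right _ _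
  have hg0 : ∀ x, 0 ≤ g x := fun x => le_max_right _ _
  have hd1 : ∀ x, d x ≤ 1 := fun x =>
    max_le (by linarith [(hG01 x).2, (hP01 x).1]) zero_le_one
  have hg1 : ∀ x, g x ≤ 1 := fun x =>
    max_le (by linarith [(hP01 x).2, (hG01 x).1]) zero_le_one
  have hdi := hbd d hdm hd0 hd1
  have hgi := hbd g hgm hg0 hg1
  have hPi := hbd P hPm (fun x => (hP01 x).1) (fun x => (hP01 x).2)
  have hGi := hbd G hGm (fun x => (hG01 x).1) (fun x => (hG01 x).2)
  have hdg : ∀ t ∈ Icc (0:ℝ) 1, (∫ x in (0:ℝ)..t, g x) ≤ ∫ x in (0:ℝ)..t, d x := by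
    intro t ht
    have e1 : (∫ x in (0:ℝ)..t, d x) - (∫ x in (0:ℝ)..t, g x) =
        (∫ x in (0:ℝ)..t, G x) - (∫ x in (0:ℝ)..t, P x) := by
      rw [← intervalIntegral.integral_sub (hdi _ _) (hgi _ _),
        ← intervalIntegral.integral_sub (hGi _ _) (hPi _ _)]
      congr 1; ext x
      simp only [d, g]
      rcases le_total (G x) (P x) with h | h
      · rw [max_eq_right (by linarith), max_eq_left (by linarith)]; ring
      · rw [max_eq_left (by linarith), max_eq_right (by linarith)]; ring
    linarith [hmaj t ht]
  set M : ℝ := ∫ x in (0:ℝ)..1, g x with hM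
  have hM0 : 0 ≤ M := intervalIntegral.integral_nonneg zero_le_one fun x _ => hg0 x
  obtain ⟨t0, ht0, ht0M⟩ := intermediate_value_Icc (zero_le_one' ℝ)
    (intervalIntegral.continuous_primitive hdi 0).continuousOn
      (show M ∈ Icc (∫ x in (0:ℝ)..0, d x) (∫ x in (0:ℝ)..1, d x) from
        ⟨by simpa using hM0, hdg 1 (by simp)⟩)
  simp only at ht0M
  let f : ℝ → ℝ := (Iic t0).indicator d
  have hfm : Measurable f := hdm.indicator measurableSet_Iic
  have hf0 : ∀ x, 0 ≤ f x := fun x => indicator_nonneg (fun x _ => hd0 x) x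
  have hfd : ∀ x, f x ≤ d x := fun x => indicator_le_self' (fun x _ => hd0 x) x
  have hf1 : ∀ x, f x ≤ 1 := fun x => (hfd x).trans (hd1 x)
  have hfi := hbd f hfm hf0 hf1
  have hFlow : ∀ t ∈ Icc (0:ℝ) t0, (∫ x in (0:ℝ)..t, f x) = ∫ x in (0:ℝ)..t, d x := by
    intro t ht
    refine intervalIntegral.integral_congr fun x hx => ?_
    rw [uIcc_of_le ht.1] at hx
    exact indicator_of_mem (show x ∈ Iic t0 from hx.2.trans ht.2) _
  have hFhigh : ∀ t, t0 ≤ t → (∫ x in (0:ℝ)..t, f x) = M := by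
    intro t ht
    rw [← intervalIntegral.integral_add_adjacent_intervals (hfi 0 t0) (hfi t0 t),
      hFlow t0 ⟨ht0.1, le_rfl⟩, ht0M]
    have : (∫ x in t0..t, f x) = 0 := by
      rw [intervalIntegral.integral_of_le ht]
      rw [setIntegral_eq_zero_of_forall_eq_zero]
      intro x hx
      exact indicator_of_notMem (show x ∉ Iic t0 from not_le.2 hx.1) _
    linarith
  have hFM : (∫ x in (0:ℝ)..1, f x) = M := hFhigh 1 ht0.2
  have hfg : ∀ t ∈ Icc (0:ℝ) 1, (∫ x in (0:ℝ)..t, g x) ≤ ∫ x in (0:ℝ)..t, f x := by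
    intro t ht
    rcases le_total t t0 with h | h
    · rw [hFlow t ⟨ht.1, h⟩]; exact hdg t ht
    · rw [hFhigh t h, hM]
      have := intervalIntegral.integral_interval_sub_left (hgi 0 1) (hgi 0 t)
      have h2 : 0 ≤ ∫ x in t..1, g x := intervalIntegral.integral_nonneg ht.2 fun x _ => hg0 x
      linarith
  obtain ⟨α, hαm, hα01, hαs, hαmap⟩ := quant f hfm hf0 hf1
  obtain ⟨β, hβm, hβ01, hβs, hβmap⟩ := quant g hgm hg0 hg1
  rw [hFM] at hαs hαmap
  rw [← hM] at hβs hβmap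
  set L := volume.restrict (Ioc (0:ℝ) M) with hL
  have hFcm : Measurable (fun t => ∫ x in (0:ℝ)..t, f x) :=
    (intervalIntegral.continuous_primitive hfi 0).measurable
  have hHcm : Measurable (fun t => ∫ x in (0:ℝ)..t, g x) :=
    (intervalIntegral.continuous_primitive hgi 0).measurable
  let r : ℝ → ℝ := fun x => if 0 < f x then β (∫ y in (0:ℝ)..x, f y) else α (∫ y in (0:ℝ)..x, g y)
  have hrm : Measurable r := Measurable.ite (measurableSet_lt measurable_const hfm)
    (hβm.comp hFcm) (hαm.comp hHcm)
  have hr01 : ∀ x, r x ∈ Icc (0:ℝ) 1 := by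
    intro x; simp only [r]; split_ifs
    · exact hβ01 _
    · exact hα01 _
  let l : ℝ → ℝ := fun x => min 1 ((f x + g x) / |G x - G (r x)|)
  have hlm : Measurable l :=
    measurable_const.min ((hfm.add hgm).div (hGm.sub (hGm.comp hrm)).abs)
  have hl01 : ∀ x, l x ∈ Icc (0:ℝ) 1 := fun x =>
    ⟨le_min zero_le_one (div_nonneg (add_nonneg (hf0 x) (hg0 x)) (abs_nonneg _)), min_le_left _ _⟩
  have hfpos : ∀ x, 0 < f x → f x = G x - P x ∧ g x = 0 := by
    intro x hx
    have h1 : f x = d x := by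
      by_contra hne
      have : x ∉ Iic t0 := fun h => hne (indicator_of_mem h _)
      rw [show f x = 0 from indicator_of_notMem this _] at hx
      exact lt_irrefl _ hx
    have h2 : 0 < G x - P x := by
      by_contra hle
      rw [h1] at hx
      simp only [d] at hx
      rw [max_eq_right (not_lt.1 hle)] at hx
      exact lt_irrefl _ hx
    exact ⟨by rw [h1]; exact max_eq_left h2.le, max_eq_right (by linarith)⟩
  have hgpos : ∀ x, 0 < g x → g x = P x - G x ∧ f x = 0 := by
    intro x hx
    have hf : f x = 0 := by
      by_contra hne
      have := (hfpos x (lt_of_le_of_ne (hf0 x) (Ne.symm hne))).2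
      linarith
    have h2 : 0 < P x - G x := by
      by_contra hle
      simp only [g] at hx
      rw [max_eq_right (not_lt.1 hle)] at hx
      exact lt_irrefl _ hx
    exact ⟨max_eq_left h2.le, hf⟩
  have key : ∀ᵐ w ∂L, 0 < f (α w) ∧ 0 < g (β w) ∧ r (α w) = β w ∧ r (β w) = α w ∧
      0 < G (α w) - G (β w) ∧
      l (α w) = f (α w) / (G (α w) - G (β w)) ∧ l (β w) = g (β w) / (G (α w) - G (β w)) := by
    filter_upwards [quant_ae hfm hαm hαmap, quant_ae hgm hβm hβmap,
      ae_restrict_mem measurableSet_Ioc] with w h1 h2 hw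
    obtain ⟨a1, a2⟩ := hαs w hw
    obtain ⟨b1, b2⟩ := hβs w hw
    obtain ⟨f1, f2⟩ := hfpos _ h1
    obtain ⟨g1, g2⟩ := hgpos _ h2
    have r1 : r (α w) = β w := by simp only [r]; rw [if_pos h1, a1]
    have r2 : r (β w) = α w := by simp only [r]; rw [if_neg (by rw [g2]; exact lt_irrefl _), b1]
    have hle : α w ≤ β w := (a2 _ (hβ01 w)).2 (by rw [← b1]; simpa [b1] using hfg _ (hβ01 w))
    have hPle := hP hle
    have hpos : 0 < G (α w) - G (β w) := by linarith
    refine ⟨h1, h2, r1, r2, hpos, ?_, ?_⟩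
    · simp only [l]
      rw [r1, f2, add_zero, abs_of_pos hpos, min_eq_right]
      rw [div_le_one hpos]; linarith
    · simp only [l]
      rw [r2, g2, zero_add, abs_sub_comm, abs_of_pos hpos, min_eq_right]
      rw [div_le_one hpos]; linarith
  have hdec : ∀ x, ENNReal.ofReal (l x) = ENNReal.ofReal (f x) * ENNReal.ofReal (l x / f x) +
      ENNReal.ofReal (g x) * ENNReal.ofReal (l x / g x) := by
    intro x
    rw [← ENNReal.ofReal_mul (hf0 x), ← ENNReal.ofReal_mul (hg0 x)]
    rcases (hf0 x).eq_or_lt' with h | h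
    · rcases (hg0 x).eq_or_lt' with h' | h'
      · have : l x = 0 := by simp [l, h, h']
        simp [this]
      · rw [mul_div_cancel₀ _ h'.ne', h]; simp
    · rw [mul_div_cancel₀ _ h.ne', (hfpos x h).2]; simp
  have hI : ∀ v : ℝ → ENNReal, Measurable v → ∫⁻ x, ENNReal.ofReal (l x) * v x ∂uni =
      (∫⁻ w, ENNReal.ofReal (1 / (G (α w) - G (β w))) * v (α w) ∂L) +
      ∫⁻ w, ENNReal.ofReal (1 / (G (α w) - G (β w))) * v (β w) ∂L := by
    intro v hv
    have e : ∀ x, ENNReal.ofReal (l x) * v x =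
        ENNReal.ofReal (f x) * (ENNReal.ofReal (l x / f x) * v x) +
        ENNReal.ofReal (g x) * (ENNReal.ofReal (l x / g x) * v x) := by
      intro x; rw [hdec x]; ring
    simp_rw [e]
    have m1 : Measurable fun x => ENNReal.ofReal (l x / f x) * v x :=
      (hlm.div hfm).ennreal_ofReal.mul hv
    have m2 : Measurable fun x => ENNReal.ofReal (l x / g x) * v x :=
      (hlm.div hgm).ennreal_ofReal.mul hv
    have m0 : Measurable fun x => ENNReal.ofReal (f x) * (ENNReal.ofReal (l x / f x) * v x) :=
      hfm.ennreal_ofReal.mul m1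
    rw [lintegral_add_left m0, quant_lint hfm hαm hαmap _ m1,
      quant_lint hgm hβm hβmap _ m2]
    congr 1
    · refine lintegral_congr_ae ?_
      filter_upwards [key] with w ⟨h1, h2, _, _, h3, h4, h5⟩
      rw [h4]; congr 2; field_simp
    · refine lintegral_congr_ae ?_
      filter_upwards [key] with w ⟨h1, h2, _, _, h3, h4, h5⟩
      rw [h5]; congr 2; field_simp
  refine ⟨l, r, hlm, hrm, hl01, hr01, ?_, ?_⟩
  · intro u hu
    rw [hI u hu, hI (fun x => u (r x)) (hu.comp hrm), add_comm]
    congr 1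
    · refine lintegral_congr_ae ?_
      filter_upwards [key] with w ⟨h1, h2, h6, h7, h3, h4, h5⟩
      rw [h7]
    · refine lintegral_congr_ae ?_
      filter_upwards [key] with w ⟨h1, h2, h6, h7, h3, h4, h5⟩
      rw [h6]
  · have hms : MeasurableSet {x | P x ≤ (1 - l x) * G x + l x * G (r x)} :=
      measurableSet_le hPm (((measurable_const.sub hlm).mul hGm).add (hlm.mul (hGm.comp hrm)))
    have q1 := quant_ae' hfm hαm hαmap hms (by
      filter_upwards [key] with w ⟨h1, h2, h6, h7, h3, h4, h5⟩
      have := (hfpos _ h1).1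
      have h8 : l (α w) * (G (α w) - G (β w)) = f (α w) := by rw [h4]; field_simp
      rw [h6]; nlinarith)
    have q2 := quant_ae' hgm hβm hβmap hms (by
      filter_upwards [key] with w ⟨h1, h2, h6, h7, h3, h4, h5⟩
      have := (hgpos _ h2).1
      have h8 : l (β w) * (G (α w) - G (β w)) = g (β w) := by rw [h5]; field_simp
      rw [h7]; nlinarith)
    filter_upwards [q1, q2] with x h1 h2
    rcases (hf0 x).eq_or_lt' with h | h
    · rcases (hg0 x).eq_or_lt' with h' | h'
      · have h3 : l x = 0 := by simp [l, h, h']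
        have : P x - G x ≤ 0 := by rw [← h']; exact le_max_left _ _
        rw [h3]; linarith
      · exact h2 h'
    · exact h1 h

lemma feas (n : ℕ) (a y : Bool → Fin n → ℝ) (ha : ∀ b j, 0 ≤ a b j)
    (hs : ∀ j, ∑ b, a b j = 1) :
    ∑ s, ∑ v, ∏ j, (if j = s then a v j else ∑ b, a b j * (if y v s < y b j then 1 else 0))
      ≤ 1 := by
  let e : Fin n → Bool → Fin n → Bool → ℝ := fun s v j b =>
    if j = s then (if b = v then 1 else 0) else if y v s < y b j then 1 else 0
  have h1 : ∀ s v j, (if j = s then a v j else ∑ b, a b j * (if y v s < y b j then 1 else 0))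
      = ∑ b, a b j * e s v j b := by
    intro s v j
    by_cases h : j = s <;> simp [e, h]
  have h2 : ∀ s v, ∏ j, ∑ b, a b j * e s v j b =
      ∑ c : Fin n → Bool, (∏ j, a (c j) j) * ∏ j, e s v j (c j) := by
    intro s v
    rw [Fintype.prod_sum]
    simp_rw [Finset.prod_mul_distrib]
  simp_rw [h1, h2]
  have h3 : ∑ s, ∑ v, ∑ c : Fin n → Bool, (∏ j, a (c j) j) * ∏ j, e s v j (c j) =
      ∑ c : Fin n → Bool, (∏ j, a (c j) j) * ∑ s, ∑ v, ∏ j, e s v j (c j) := by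
    simp_rw [Finset.mul_sum]
    rw [Finset.sum_comm' (t' := Finset.univ) (s' := fun _ => Finset.univ) (by simp)]
    simp_rw [Finset.sum_comm (s := (Finset.univ : Finset (Fin n → Bool)))]
    rw [Finset.sum_comm]
  rw [h3]
  have h4 : ∀ c : Fin n → Bool, ∑ s, ∑ v, ∏ j, e s v j (c j) ≤ 1 := by
    intro c
    have h5 : ∀ s, ∑ v, ∏ j, e s v j (c j) ≤
        if ∀ j, j ≠ s → y (c s) s < y (c j) j then 1 else 0 := by
      intro s
      rw [Finset.sum_eq_single (c s)]
      · split_ifs with h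
        · refine Finset.prod_le_one ?_ ?_
          · intro j _; simp only [e]; split_ifs <;> norm_num
          · intro j _; simp only [e]; split_ifs <;> norm_num
        · push Not at h
          obtain ⟨j, hj, hlt⟩ := h
          refine (Finset.prod_eq_zero (Finset.mem_univ j) ?_).le
          simp [e, hj, not_lt.2 hlt]
      · intro v _ hv
        refine Finset.prod_eq_zero (Finset.mem_univ s) ?_
        simp [e, hv.symm]
      · simp
    refine (Finset.sum_le_sum fun s _ => h5 s).trans ?_
    rw [Finset.sum_boole]
    have : (Finset.univ.filter fun s => ∀ j, j ≠ s → y (c s) s < y (c j) j).card ≤ 1 := by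
      rw [Finset.card_le_one]
      intro s hs t ht
      simp only [Finset.mem_filter, Finset.mem_univ, true_and] at hs ht
      by_contra hne
      exact lt_asymm (hs t (Ne.symm hne)) (ht s hne)
    exact_mod_cast this
  calc _ ≤ ∑ c : Fin n → Bool, (∏ j, a (c j) j) * 1 :=
        Finset.sum_le_sum fun c _ => mul_le_mul_of_nonneg_left (h4 c)
          (Finset.prod_nonneg fun j _ => ha _ _)
    _ = ∏ j, ∑ b, a b j := by simp only [mul_one]; rw [Fintype.prod_sum]
    _ = 1 := Finset.prod_eq_one fun j _ => hs j

lemma upd_mp (n : ℕ) (s : Fin n) :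
    MeasurePreserving (fun z : ℝ × (Fin n → ℝ) => Function.update z.2 s z.1)
      (uni.prod (pimeas n)) (pimeas n) := by
  have hm : Measurable (fun z : ℝ × (Fin n → ℝ) => Function.update z.2 s z.1) := by
    refine measurable_pi_lambda _ fun j => ?_
    by_cases h : j = s
    · subst h; simpa using measurable_fst
    · simp only [Function.update_of_ne h]; exact (measurable_pi_apply j).comp measurable_snd
  refine ⟨hm, ?_⟩
  change _ = Measure.pi fun _ => uni
  symm
  refine Measure.pi_eq fun t ht => ?_
  rw [Measure.map_apply hm (MeasurableSet.univ_pi ht)]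
  have e : (fun z : ℝ × (Fin n → ℝ) => Function.update z.2 s z.1) ⁻¹' (univ.pi t) =
      t s ×ˢ (univ.pi (Function.update t s univ)) := by
    ext z
    simp only [mem_preimage, mem_pi, mem_univ, true_imp_iff, mem_prod]
    constructor
    · intro h
      refine ⟨by simpa using h s, fun j => ?_⟩
      by_cases hj : j = s
      · subst hj; simp
      · simpa [Function.update_of_ne hj] using h j
    · rintro ⟨h1, h2⟩ j
      by_cases hj : j = s
      · subst hj; simpa using h1
      · simpa [Function.update_of_ne hj] using h2 j
  rw [e, Measure.prod_prod]
  change uni (t s) * (Measure.pi fun _ => uni) _ = _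
  rw [Measure.pi_pi, ← Finset.mul_prod_erase Finset.univ _ (Finset.mem_univ s),
    ← Finset.mul_prod_erase Finset.univ (fun i => uni (t i)) (Finset.mem_univ s)]
  simp only [Function.update_self, measure_univ, one_mul]
  congr 1
  refine Finset.prod_congr rfl fun j hj => ?_
  rw [Function.update_of_ne (Finset.ne_of_mem_erase hj)]

lemma uni_Ioi {c : ℝ} (hc : c ∈ Icc (0:ℝ) 1) : uni.real (Ioi c) = 1 - c := by
  have : Ioi c ∩ Icc 0 1 = Ioc c 1 := by
    ext x; simp only [mem_inter_iff, mem_Ioi, mem_Icc, mem_Ioc]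
    constructor
    · rintro ⟨h, _, h'⟩; exact ⟨h, h'⟩
    · rintro ⟨h, h'⟩; exact ⟨h, hc.1.trans h.le, h'⟩
  rw [measureReal_def, uni, Measure.restrict_apply measurableSet_Ioi, this, Real.volume_Ioc,
    ENNReal.toReal_ofReal (by linarith [hc.2])]

lemma int_ind {c : ℝ} (hc : c ∈ Icc (0:ℝ) 1) :
    ∫ x, (if c < x then (1:ℝ) else 0) ∂uni = 1 - c := by
  have : (fun x : ℝ => if c < x then (1:ℝ) else 0) = (Ioi c).indicator 1 := by
    ext x; simp [indicator]
  rw [this, integral_indicator_one measurableSet_Ioi, uni_Ioi hc]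

lemma necess (n : ℕ) (hn : 2 ≤ n) (P : ℝ → ℝ)
    (p : Fin n → (Fin n → ℝ) → ℝ) (hm : ∀ s, Measurable (p s))
    (h01 : ∀ s q, p s q ∈ Icc (0:ℝ) 1)
    (hsum : ∀ q : Fin n → ℝ, (∀ k, q k ∈ Icc (0:ℝ) 1) → (∑ s, p s q) ≤ 1)
    (hInt : ∀ s : Fin n, ∀ᵐ x ∂uni, (∫ q, p s (Function.update q s x) ∂(pimeas n)) = P x)
    (t : ℝ) (ht : t ∈ Icc (0:ℝ) 1) :
    (∫ s in (0:ℝ)..t, P s) ≤ (1 - (1 - t) ^ n) / (n : ℝ) := by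
  have hmm : ∀ s, Measurable fun q : Fin n → ℝ => (if q s ≤ t then (1:ℝ) else 0) * p s q := by
    intro s
    exact (Measurable.ite (measurableSet_le (measurable_pi_apply s) measurable_const)
      measurable_const measurable_const).mul (hm s)
  have hb : ∀ s (q : Fin n → ℝ), (if q s ≤ t then (1:ℝ) else 0) * p s q ∈ Icc (0:ℝ) 1 := by
    intro s q
    split_ifs
    · simpa using h01 s q
    · simp
  have hii : ∀ s, Integrable (fun q : Fin n → ℝ => (if q s ≤ t then (1:ℝ) else 0) * p s q)
      (pimeas n) := by
    intro s
    refine Integrable.of_bound (hmm s).aestronglyMeasurable 1 (Filter.Eventually.of_forall fun q => ?_)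
    rw [Real.norm_eq_abs, abs_of_nonneg (hb s q).1]; exact (hb s q).2
  have h1 : ∀ s, (∫ x in (0:ℝ)..t, P x) =
      ∫ q, (if q s ≤ t then (1:ℝ) else 0) * p s q ∂(pimeas n) := by
    intro s
    have e1 : (∫ x in (0:ℝ)..t, P x) = ∫ x, (if x ≤ t then (1:ℝ) else 0) * P x ∂uni := by
      have : (fun x => (if x ≤ t then (1:ℝ) else 0) * P x) = (Iic t).indicator P := by
        ext x; simp [indicator]
      rw [this, integral_indicator measurableSet_Iic, uni, Measure.restrict_restrict measurableSet_Iic,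
        intervalIntegral.integral_of_le ht.1, ← integral_Icc_eq_integral_Ioc]
      congr 2
      ext x; simp only [mem_inter_iff, mem_Icc, mem_Iic]
      constructor
      · rintro ⟨a, b⟩; exact ⟨b, a, b.trans ht.2⟩
      · rintro ⟨a, b, c⟩; exact ⟨b, a⟩
    have e2 : ∫ x, (if x ≤ t then (1:ℝ) else 0) * P x ∂uni =
        ∫ x, ∫ q, (fun q : Fin n → ℝ => (if q s ≤ t then (1:ℝ) else 0) * p s q)
          (Function.update q s x) ∂(pimeas n) ∂uni := by
      refine integral_congr_ae ?_
      filter_upwards [hInt s] with x hx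
      simp only [Function.update_self]
      rw [integral_const_mul, hx]
    rw [e1, e2]
    have hmp := upd_mp n s
    rw [← hmp.map_eq, integral_map hmp.measurable.aemeasurable (hmm s).aestronglyMeasurable,
      hmp.map_eq]
    rw [integral_prod]
    exact hmp.integrable_comp_of_integrable (hii s)
  have h2 : (n : ℝ) * (∫ x in (0:ℝ)..t, P x) =
      ∫ q, ∑ s, (if q s ≤ t then (1:ℝ) else 0) * p s q ∂(pimeas n) := by
    rw [integral_finsetSum _ fun s _ => hii s]
    simp_rw [← h1]; simp
  have h3 : ∫ q : Fin n → ℝ, ∏ s, (if t < q s then (1:ℝ) else 0) ∂(pimeas n) = (1 - t) ^ n := by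
    have := integral_fintype_prod_eq_prod (μ := fun _ : Fin n => uni)
      (fun (_ : Fin n) (x : ℝ) => if t < x then (1:ℝ) else 0)
    rw [show pimeas n = Measure.pi fun _ => uni from rfl, this]
    simp [int_ind ht]
  have hi3 : Integrable (fun q : Fin n → ℝ => ∏ s, (if t < q s then (1:ℝ) else 0)) (pimeas n) := by
    refine Integrable.of_bound (Measurable.aestronglyMeasurable ?_) 1
      (Filter.Eventually.of_forall fun q => ?_)
    · refine Finset.measurable_prod _ fun s _ => ?_
      exact Measurable.ite (measurableSet_lt measurable_const (measurable_pi_apply s))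
        measurable_const measurable_const
    · rw [Real.norm_eq_abs, abs_of_nonneg]
      · refine Finset.prod_le_one ?_ ?_ <;> intro j _ <;> split_ifs <;> norm_num
      · refine Finset.prod_nonneg ?_ ; intro j _ ; split_ifs <;> norm_num
  have h4 : ∀ᵐ q ∂(pimeas n), ∀ k, q k ∈ Icc (0:ℝ) 1 := by
    rw [ae_all_iff]
    intro k
    have : ∀ᵐ x ∂uni, x ∈ Icc (0:ℝ) 1 := ae_restrict_mem measurableSet_Icc
    exact (Measure.tendsto_eval_ae_ae (μ := fun _ : Fin n => uni) (i := k)).eventually this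
  have h5 : (∫ q, ∑ s, (if q s ≤ t then (1:ℝ) else 0) * p s q ∂(pimeas n)) ≤
      ∫ q : Fin n → ℝ, (1 - ∏ s, (if t < q s then (1:ℝ) else 0)) ∂(pimeas n) := by
    refine integral_mono_ae (integrable_finsetSum _ fun s _ => hii s)
      ((integrable_const _).sub hi3) ?_
    filter_upwards [h4] with q hq
    by_cases h : ∀ s, t < q s
    · have : ∀ s, ¬ q s ≤ t := fun s => not_le.2 (h s)
      simp [this, h]
    · push Not at h
      obtain ⟨j, hj⟩ := h
      rw [Finset.prod_eq_zero (Finset.mem_univ j) (by simp [not_lt.2 hj]), sub_zero]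
      refine (Finset.sum_le_sum fun s _ => ?_).trans (hsum q hq)
      split_ifs
      · simp
      · simpa using (h01 s q).1
  rw [integral_sub (integrable_const _) hi3, h3] at h5
  simp only [integral_const, probReal_univ, smul_eq_mul, mul_one] at h5
  have hn' : (0:ℝ) < n := by exact_mod_cast (by omega : 0 < n)
  rw [le_div_iff₀ hn']
  linarith

lemma suff (n : ℕ) (hn : 2 ≤ n) (P : ℝ → ℝ)
    (hP : Antitone P) (hP01 : ∀ x, P x ∈ Icc (0:ℝ) 1)
    (G : ℝ → ℝ) (hG : Antitone G) (hG01 : ∀ x, G x ∈ Icc (0:ℝ) 1)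
    (hGe : ∀ x ∈ Icc (0:ℝ) 1, G x = (1 - x) ^ (n - 1))
    (hmaj : ∀ t ∈ Icc (0:ℝ) 1, (∫ x in (0:ℝ)..t, P x) ≤ ∫ x in (0:ℝ)..t, G x) :
    ∃ p : Fin n → (Fin n → ℝ) → ℝ,
        (∀ s, Measurable (p s)) ∧
        (∀ s q, p s q ∈ Icc (0:ℝ) 1) ∧
        (∀ q : Fin n → ℝ, (∑ s, p s q) ≤ 1) ∧
        (∀ s : Fin n, ∀ᵐ x ∂uni,
          (∫ q : Fin n → ℝ, p s (Function.update q s x) ∂(pimeas n)) = P x) := by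
  obtain ⟨l, r, hlm, hrm, hl01, hr01, hex, hge⟩ := exch P G hP hG hP01 hG01 hmaj
  have hPm : Measurable P := hP.measurable
  have hGm : Measurable G := hG.measurable
  let a : Bool → ℝ → ℝ := fun b x => if b then l x else 1 - l x
  let y : Bool → ℝ → ℝ := fun b x => if b then r x else x
  have ham : ∀ b, Measurable (a b) := by
    intro b; cases b
    · exact (measurable_const (a := (1:ℝ))).sub hlm
    · simpa [a] using hlm
  have hym : ∀ b, Measurable (y b) := by
    intro b; cases b
    · exact measurable_id
    · simpa [y] using hrm
  have ha0 : ∀ b x, 0 ≤ a b x := by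
    intro b x; cases b
    · simpa [a] using (hl01 x).2
    · simpa [a] using (hl01 x).1
  have ha1 : ∀ x, ∑ b, a b x = 1 := by intro x; simp [a]
  let h : ℝ → ℝ → ℝ := fun c x => ∑ b, a b x * (if c < y b x then 1 else 0)
  have hh0 : ∀ c x, 0 ≤ h c x := fun c x => Finset.sum_nonneg fun b _ =>
    mul_nonneg (ha0 b x) (by split_ifs <;> norm_num)
  have hInt : ∀ c ∈ Icc (0:ℝ) 1, ∫ x, h c x ∂uni = 1 - c := by
    intro c hc
    have hInd : Measurable fun x : ℝ => (if c < x then (1:ℝ) else 0) :=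
      Measurable.ite (measurableSet_lt measurable_const measurable_id) measurable_const
        measurable_const
    have hbd : ∀ k : ℝ → ℝ, Measurable k → (∀ x, k x ∈ Icc (0:ℝ) 1) → Integrable k uni := by
      intro k hk h01
      refine Integrable.of_bound hk.aestronglyMeasurable 1 (Filter.Eventually.of_forall fun x => ?_)
      rw [Real.norm_eq_abs, abs_of_nonneg (h01 x).1]; exact (h01 x).2
    have hind01 : ∀ x : ℝ, (if c < x then (1:ℝ) else 0) ∈ Icc (0:ℝ) 1 := by
      intro x; split_ifs <;> simp
    have hmul : ∀ x z : ℝ, l x * (if c < z then (1:ℝ) else 0) ∈ Icc (0:ℝ) 1 := fun x z =>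
      ⟨mul_nonneg (hl01 x).1 (hind01 z).1, mul_le_one₀ (hl01 x).2 (hind01 z).1 (hind01 z).2⟩
    have m1 : Measurable fun x => l x * (if c < x then (1:ℝ) else 0) := hlm.mul hInd
    have m2 : Measurable fun x => l x * (if c < r x then (1:ℝ) else 0) := hlm.mul (hInd.comp hrm)
    have e1 : ∫ x, l x * (if c < r x then (1:ℝ) else 0) ∂uni =
        ∫ x, l x * (if c < x then (1:ℝ) else 0) ∂uni := by
      rw [integral_eq_lintegral_of_nonneg_ae (Filter.Eventually.of_forall fun x => (hmul x _).1)
          m2.aestronglyMeasurable,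
        integral_eq_lintegral_of_nonneg_ae (Filter.Eventually.of_forall fun x => (hmul x _).1)
          m1.aestronglyMeasurable]
      congr 1
      simp_rw [ENNReal.ofReal_mul (hl01 _).1]
      exact hex (fun x => ENNReal.ofReal (if c < x then (1:ℝ) else 0)) hInd.ennreal_ofReal
    have e2 : ∀ x, h c x = ((if c < x then (1:ℝ) else 0) - l x * (if c < x then (1:ℝ) else 0)) +
        l x * (if c < r x then (1:ℝ) else 0) := by
      intro x; simp only [h, a, y, Fintype.sum_bool]; simp only [if_true, Bool.false_eq_true, if_false]; ring
    simp_rw [e2]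
    have i0 := hbd _ hInd hind01
    have i1 := hbd _ m1 fun x => hmul x _
    have i2 := hbd _ m2 fun x => hmul x _
    have i01 : Integrable (fun x => (if c < x then (1:ℝ) else 0) - l x * (if c < x then (1:ℝ) else 0)) uni :=
      i0.sub i1
    rw [integral_add i01 i2, integral_sub i0 i1, e1, int_ind hc]
    ring
  let p₀ : Fin n → (Fin n → ℝ) → ℝ := fun s q =>
    ∑ v, ∏ j, (if j = s then a v (q j) else h (y v (q s)) (q j))
  have hp₀m : ∀ s, Measurable (p₀ s) := by
    intro s
    refine Finset.measurable_sum _ fun v _ => Finset.measurable_prod _ fun j _ => ?_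
    by_cases hj : j = s
    · simp only [hj, if_true]; exact (ham v).comp (measurable_pi_apply s)
    · simp only [hj, if_false, h]
      refine Finset.measurable_sum _ fun b _ => ((ham b).comp (measurable_pi_apply j)).mul ?_
      exact Measurable.ite (measurableSet_lt ((hym v).comp (measurable_pi_apply s))
        ((hym b).comp (measurable_pi_apply j))) measurable_const measurable_const
  have hp₀0 : ∀ s q, 0 ≤ p₀ s q := by
    intro s q
    refine Finset.sum_nonneg fun v _ => Finset.prod_nonneg fun j _ => ?_
    split_ifs
    · exact ha0 _ _
    · exact hh0 _ _
  have hp₀s : ∀ q, ∑ s, p₀ s q ≤ 1 := fun q =>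
    feas n (fun b j => a b (q j)) (fun b j => y b (q j)) (fun b j => ha0 _ _) (fun j => ha1 _)
  have hp₀1 : ∀ s q, p₀ s q ≤ 1 := fun s q =>
    (Finset.single_le_sum (f := fun s => p₀ s q) (fun s _ => hp₀0 s q) (Finset.mem_univ s)).trans (hp₀s q)
  let Q : ℝ → ℝ := fun x => (1 - l x) * G x + l x * G (r x)
  have hQm : Measurable Q :=
    ((measurable_const.sub hlm).mul hGm).add (hlm.mul (hGm.comp hrm))
  let ρ : ℝ → ℝ := fun x => max 0 (min 1 (P x / Q x))
  have hρm : Measurable ρ := measurable_const.max (measurable_const.min (hPm.div hQm))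
  have hρ0 : ∀ x, 0 ≤ ρ x := fun x => le_max_left _ _
  have hρ1 : ∀ x, ρ x ≤ 1 := fun x => max_le zero_le_one (min_le_left _ _)
  have hp₀i : ∀ s, ∀ x ∈ Icc (0:ℝ) 1,
      ∫ q, p₀ s (Function.update q s x) ∂(pimeas n) = Q x := by
    intro s x hx
    have e1 : ∀ q : Fin n → ℝ, p₀ s (Function.update q s x) =
        ∑ v, ∏ j, (if j = s then fun _ => a v x else h (y v x)) (q j) := by
      intro q
      simp only [p₀]
      refine Finset.sum_congr rfl fun v _ => Finset.prod_congr rfl fun j _ => ?_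
      by_cases hj : j = s
      · subst hj; simp
      · simp [hj]
    have e2 : ∀ v, ∫ q : Fin n → ℝ, ∏ j, (if j = s then fun _ => a v x else h (y v x)) (q j) ∂(pimeas n)
        = a v x * G (y v x) := by
      intro v
      have hy : y v x ∈ Icc (0:ℝ) 1 := by
        cases v
        · simpa [y] using hx
        · simpa [y] using hr01 x
      have := integral_fintype_prod_eq_prod (μ := fun _ : Fin n => uni)
        (fun (j : Fin n) => (if j = s then fun _ : ℝ => a v x else h (y v x)))
      rw [show pimeas n = Measure.pi fun _ => uni from rfl, this,
        ← Finset.mul_prod_erase Finset.univ _ (Finset.mem_univ s)]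
      rw [Finset.prod_congr rfl (g := fun _ => 1 - y v x)]
      · simp [hGe _ hy]
      · intro j hj
        simp only [Finset.ne_of_mem_erase hj, if_false]
        exact hInt _ hy
    have e3 : ∀ v, Integrable (fun q : Fin n → ℝ =>
        ∏ j, (if j = s then fun _ => a v x else h (y v x)) (q j)) (pimeas n) := by
      intro v
      refine Integrable.fintype_prod (μ := fun _ : Fin n => uni) (f := fun (j : Fin n) =>
        (if j = s then fun _ : ℝ => a v x else h (y v x))) fun j => ?_
      split_ifs
      · exact integrable_const _
      · refine Integrable.of_bound (Measurable.aestronglyMeasurable ?_) 1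
          (Filter.Eventually.of_forall fun z => ?_)
        · refine Finset.measurable_sum _ fun b _ => (ham b).mul ?_
          exact Measurable.ite (measurableSet_lt measurable_const (hym b)) measurable_const
            measurable_const
        · rw [Real.norm_eq_abs, abs_of_nonneg (hh0 _ _), ← ha1 z]
          refine Finset.sum_le_sum fun b _ => ?_
          refine mul_le_of_le_one_right (ha0 b z) ?_
          split_ifs <;> norm_num
    simp_rw [e1]
    rw [integral_finsetSum _ fun v _ => e3 v]
    simp_rw [e2]
    simp [a, y, Q]; ring
  refine ⟨fun s q => ρ (q s) * p₀ s q, ?_, ?_, ?_, ?_⟩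
  · intro s
    exact (hρm.comp (measurable_pi_apply s)).mul (hp₀m s)
  · intro s q
    exact ⟨mul_nonneg (hρ0 _) (hp₀0 s q), mul_le_one₀ (hρ1 _) (hp₀0 s q) (hp₀1 s q)⟩
  · intro q
    refine (Finset.sum_le_sum fun s _ => ?_).trans (hp₀s q)
    exact mul_le_of_le_one_left (hp₀0 s q) (hρ1 _)
  · intro s
    have hx01 : ∀ᵐ x ∂uni, x ∈ Icc (0:ℝ) 1 := ae_restrict_mem measurableSet_Icc
    filter_upwards [hge, hx01] with x hx hxI
    simp only [Function.update_self]
    rw [integral_const_mul, hp₀i s x hxI]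
    have hPQ : P x ≤ Q x := hx
    have hP0 := (hP01 x).1
    have : ρ x = P x / Q x := by
      simp only [ρ]
      rw [min_eq_right (div_le_one_of_le₀ hPQ (hP0.trans hPQ)),
        max_eq_right (div_nonneg hP0 (hP0.trans hPQ))]
    rw [this]
    rcases (hP0.trans hPQ).eq_or_lt' with h0 | h0
    · rw [h0]; simp; linarith
    · field_simp

lemma int_pow (n : ℕ) (hn : 2 ≤ n) (t : ℝ) :
    (∫ s in (0:ℝ)..t, (1 - s) ^ (n - 1)) = (1 - (1 - t) ^ n) / (n : ℝ) := by
  rw [intervalIntegral.integral_comp_sub_left (fun x => x ^ (n - 1)) 1, integral_pow]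
  have : n - 1 + 1 = n := by omega
  rw [this]
  have h2 : ((n - 1 : ℕ) : ℝ) + 1 = n := by exact_mod_cast this
  rw [h2]; simp

/-- **Border's condition.** A nonincreasing `P : [0,1] → [0,1]` is the
interim allocation of a feasible ex-post allocation rule with i.i.d. uniform types on
`[0,1]` if and only if `∫₀ᵗ P ≤ ∫₀ᵗ (1−s)^{n−1} ds = (1 − (1−t)ⁿ)/n` for all `t ∈ [0,1]`. -/
theorem stmt_2 (n : ℕ) (hn : 2 ≤ n)
    (P : ℝ → ℝ)
    (hP_mem : ∀ x ∈ Icc (0:ℝ) 1, P x ∈ Icc (0:ℝ) 1)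
    (hP_anti : AntitoneOn P (Icc (0:ℝ) 1)) :
    (∀ t ∈ Icc (0:ℝ) 1,
        (∫ s in (0:ℝ)..t, (1 - s) ^ (n - 1)) = (1 - (1 - t) ^ n) / (n : ℝ)) ∧
    ((∃ p : Fin n → (Fin n → ℝ) → ℝ,
        (∀ s, Measurable (p s)) ∧
        (∀ s q, p s q ∈ Icc (0:ℝ) 1) ∧
        (∀ q : Fin n → ℝ, (∀ k, q k ∈ Icc (0:ℝ) 1) → (∑ s, p s q) ≤ 1) ∧
        (∀ s : Fin n, ∀ᵐ x ∂(volume.restrict (Icc (0:ℝ) 1)),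
          (∫ q : Fin n → ℝ, p s (Function.update q s x) ∂(pimeas n)) = P x)) ↔
      ∀ t ∈ Icc (0:ℝ) 1, (∫ s in (0:ℝ)..t, P s) ≤ (1 - (1 - t) ^ n) / (n : ℝ)) := by
  refine ⟨fun t _ => int_pow n hn t, ?_, ?_⟩
  · rintro ⟨p, h1, h2, h3, h4⟩ t ht
    exact necess n hn P p h1 h2 h3 h4 t ht
  · intro hB
    let cl : ℝ → ℝ := fun x => max 0 (min 1 x)
    have hcl : ∀ x, cl x ∈ Icc (0:ℝ) 1 := fun x =>
      ⟨le_max_left _ _, max_le zero_le_one (min_le_left _ _)⟩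
    have hclm : Monotone cl := fun a b hab => max_le_max le_rfl (min_le_min le_rfl hab)
    have hcle : ∀ x ∈ Icc (0:ℝ) 1, cl x = x := by
      intro x hx; simp only [cl]; rw [min_eq_right hx.2, max_eq_right hx.1]
    have hcong : ∀ (k : ℝ → ℝ), ∀ t ∈ Icc (0:ℝ) 1,
        (∫ x in (0:ℝ)..t, k (cl x)) = ∫ x in (0:ℝ)..t, k x := by
      intro k t ht
      refine intervalIntegral.integral_congr fun x hx => ?_
      rw [uIcc_of_le ht.1] at hx
      rw [hcle x ⟨hx.1, hx.2.trans ht.2⟩]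
    obtain ⟨p, h1, h2, h3, h4⟩ := suff n hn (fun x => P (cl x))
      (fun a b hab => hP_anti (hcl a) (hcl b) (hclm hab)) (fun x => hP_mem _ (hcl x))
      (fun x => (1 - cl x) ^ (n - 1))
      (fun a b hab => pow_le_pow_left₀ (by linarith [(hcl b).2]) (by linarith [hclm hab]) _)
      (fun x => ⟨pow_nonneg (by linarith [(hcl x).2]) _,
        pow_le_one₀ (by linarith [(hcl x).2]) (by linarith [(hcl x).1])⟩)
      (fun x hx => by simp only [hcle x hx])
      (fun t ht => by
        rw [hcong P t ht, hcong (fun x => (1 - x) ^ (n - 1)) t ht, int_pow n hn t]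
        exact hB t ht)
    refine ⟨p, h1, h2, fun q _ => h3 q, fun s => ?_⟩
    have hx01 : ∀ᵐ x ∂(volume.restrict (Icc (0:ℝ) 1)), x ∈ Icc (0:ℝ) 1 :=
      ae_restrict_mem measurableSet_Icc
    have h5 := h4 s
    rw [uni] at h5
    filter_upwards [h5, hx01] with x hx hxI
    rw [hx, hcle x hxI]
end

section
/- Fix a bid-restricted auction with bid intervals {[b̲_i, b̄_i]}_{i=1}^M (0 ≤ b̲_1, b̄_M ≤ 1, b̲_i ≤ b̄_i, b̄_i < b̲_{i+1}; set b̄_0 = 0) and let u(q; b, β_{-}) be the expected payoff of a seller with quality q ∈ [0,1] who submits bid b against opponents' bid profile β_{-}, as defined in the context. Then the strategy β* given by β*(q) = q if q ∈ [b̲_i, b̄_i) for some i, β*(q) = b̲_i if q ∈ [b̄_{i−1}, b̲_i) for some i, and β*(q) = ⊥ (no bid) if q ≥ b̄_M, is weakly dominant: for every q ∈ [0,1], every opponents' profile β_{-} ∈ (A ∪ {⊥})^{n−1}, and every b ∈ A ∪ {⊥}, one has u(q; β*(q), β_{-}) ≥ u(q; b, β_{-}). -/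
open scoped Classical
open Set

/-- `b̄_{i-1}`, the upper endpoint of the bid interval preceding `i`, with the
convention `b̄₀ = 0`. -/
noncomputable def prevHi (M : ℕ) (bhi : Fin M → ℝ) (j : Fin M) : ℝ :=
  if j.val = 0 then 0 else bhi ⟨j.val - 1, lt_of_le_of_lt (Nat.sub_le _ _) j.isLt⟩

/-- The payoff of a seller with quality `q` who submits bid `b` (`none` = abstain) in a
bid-restricted auction with bid intervals `[blo i, bhi i]`, against the opponents' bid
profile `β`.  The seller gets `0` if she abstains or some opponent bids strictly below
her; if `k ≥ 1` opponents tie with her she gets `(b − q)/(k+1)`; if she is the strict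
lowest bidder she is paid the second-lowest bid `m` (equal to `b̄_M` if no opponent
bids), except that when her bid is the only bid in its interval `[blo i, bhi i]` and
`m = blo j` for some `j > i` with `k` opponents bidding `blo j`, she is paid the
reduced amount `(blo j + k·b̄_{j−1})/(k+1)`. -/
noncomputable def braPayoff (M : ℕ) (blo bhi : Fin M → ℝ) (N : ℕ)
    (q : ℝ) (b : Option ℝ) (β : Fin N → Option ℝ) : ℝ :=
  match b with
  | none => 0
  | some bb =>
    if ∃ j v, β j = some v ∧ v < bb then 0
    else
      let k : ℕ := (Finset.univ.filter fun j => β j = some bb).card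
      if 1 ≤ k then (bb - q) / (k + 1)
      else
        let m : ℝ :=
          if ∃ j v, β j = some v then sInf {v | ∃ j, β j = some v}
          else if h : M = 0 then 0
          else bhi ⟨M - 1, Nat.sub_lt (Nat.pos_of_ne_zero h) Nat.one_pos⟩
        if hsp : ∃ ij : Fin M × Fin M,
            bb ∈ Icc (blo ij.1) (bhi ij.1) ∧
            (∀ j v, β j = some v → v ∉ Icc (blo ij.1) (bhi ij.1)) ∧
            ij.1 < ij.2 ∧ m = blo ij.2 then
          (blo hsp.choose.2 +
              ((Finset.univ.filter fun j => β j = some (blo hsp.choose.2)).card : ℝ) *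
                prevHi M bhi hsp.choose.2) /
            (((Finset.univ.filter fun j => β j = some (blo hsp.choose.2)).card : ℝ) + 1)
            - q
        else m - q

theorem bra_sep (M : ℕ) (blo bhi : Fin M → ℝ) (hle : ∀ i, blo i ≤ bhi i)
    (hsep : ∀ i : Fin M, ∀ h : i.val + 1 < M, bhi i < blo ⟨i.val + 1, h⟩)
    (i j : Fin M) (hij : i < j) : bhi i < blo j := by
  obtain ⟨j, hj⟩ := j
  have hij' : i.val < j := hij
  clear hij
  induction j with
  | zero => omega
  | succ n ih =>
    rcases Nat.lt_succ_iff_lt_or_eq.mp hij' with h | h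
    · have h1 := ih (by omega) h
      have h2 := hsep ⟨n, by omega⟩ hj
      have h3 := hle ⟨n, by omega⟩
      simp only at h2
      linarith
    · subst h
      exact hsep i hj

theorem bra_prev (M : ℕ) (blo bhi : Fin M → ℝ) (hle : ∀ i, blo i ≤ bhi i)
    (hsep : ∀ i : Fin M, ∀ h : i.val + 1 < M, bhi i < blo ⟨i.val + 1, h⟩)
    (i j : Fin M) (hij : i < j) : bhi i ≤ prevHi M bhi j ∧ prevHi M bhi j < blo j := by
  have hij' : i.val < j.val := hij
  unfold prevHi
  rw [if_neg (by omega)]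
  constructor
  · by_cases h : i.val = j.val - 1
    · apply le_of_eq; congr 1; exact Fin.ext h
    · have h1 := bra_sep M blo bhi hle hsep i ⟨j.val - 1, by omega⟩ (by
        rw [Fin.lt_def]; simp only; omega)
      exact h1.le.trans (hle _)
  · apply bra_sep M blo bhi hle hsep
    rw [Fin.lt_def]; simp only; omega

theorem bra_inj (M : ℕ) (blo bhi : Fin M → ℝ) (hle : ∀ i, blo i ≤ bhi i)
    (hsep : ∀ i : Fin M, ∀ h : i.val + 1 < M, bhi i < blo ⟨i.val + 1, h⟩)
    (i j : Fin M) (x : ℝ) (hi : x ∈ Icc (blo i) (bhi i)) (hj : x ∈ Icc (blo j) (bhi j)) :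
    i = j := by
  rcases lt_trichotomy i j with h | h | h
  · have := bra_sep M blo bhi hle hsep i j h
    linarith [hi.2, hj.1]
  · exact h
  · have := bra_sep M blo bhi hle hsep j i h
    linarith [hj.2, hi.1]

theorem bra_empty (M : ℕ) (hM : 1 ≤ M) (blo bhi : Fin M → ℝ) (N : ℕ) (q b : ℝ)
    (β : Fin N → Option ℝ) (he : ∀ j v, β j ≠ some v) :
    braPayoff M blo bhi N q (some b) β = bhi ⟨M - 1, Nat.sub_lt hM Nat.one_pos⟩ - q := by
  have hM0 : M ≠ 0 := by omega
  simp only [braPayoff]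
  have hc : ∀ x : ℝ, (Finset.univ.filter fun j => β j = some x).card = 0 := by
    intro x
    rw [Finset.card_eq_zero, Finset.filter_eq_empty_iff]
    exact fun j _ => he j x
  rw [if_neg (by rintro ⟨j, v, h, _⟩; exact he j v h), if_neg (by rw [hc]; norm_num),
    if_neg (by rintro ⟨j, v, h⟩; exact he j v h), dif_neg hM0]
  split_ifs with h
  · have h1 := h.choose_spec.2.2.2
    rw [hc, ← h1]
    norm_num
  · rfl

theorem bra_gt (M : ℕ) (blo bhi : Fin M → ℝ) (N : ℕ) (q b m : ℝ)
    (β : Fin N → Option ℝ) (j : Fin N) (hj : β j = some m) (hb : m < b) :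
    braPayoff M blo bhi N q (some b) β = 0 := by
  simp only [braPayoff]
  rw [if_pos ⟨j, m, hj, hb⟩]

theorem bra_eq (M : ℕ) (blo bhi : Fin M → ℝ) (N : ℕ) (q m : ℝ)
    (β : Fin N → Option ℝ) (j : Fin N) (hj : β j = some m)
    (hmin : ∀ j v, β j = some v → m ≤ v) :
    braPayoff M blo bhi N q (some m) β =
      (m - q) / (((Finset.univ.filter fun j => β j = some m).card : ℝ) + 1) := by
  simp only [braPayoff]
  rw [if_neg, if_pos]
  · exact Finset.card_pos.mpr ⟨j, by simpa using hj⟩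
  · rintro ⟨j, v, h, hv⟩
    linarith [hmin j v h]

theorem bra_lt (M : ℕ) (blo bhi : Fin M → ℝ) (hle : ∀ i, blo i ≤ bhi i)
    (hsep : ∀ i : Fin M, ∀ h : i.val + 1 < M, bhi i < blo ⟨i.val + 1, h⟩)
    (N : ℕ) (q b m : ℝ)
    (β : Fin N → Option ℝ) (j : Fin N) (hj : β j = some m)
    (hmin : ∀ j v, β j = some v → m ≤ v) (hb : b < m)
    (i : Fin M) (hi : b ∈ Icc (blo i) (bhi i)) :
    (∀ l, m = blo l → braPayoff M blo bhi N q (some b) β =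
      (m + ((Finset.univ.filter fun j => β j = some m).card : ℝ) * prevHi M bhi l) /
       (((Finset.univ.filter fun j => β j = some m).card : ℝ) + 1) - q) ∧
    ((∀ l, m ≠ blo l) → braPayoff M blo bhi N q (some b) β = m - q) := by
  have h1 : ¬ ∃ j v, β j = some v ∧ v < b := by
    rintro ⟨j, v, h, hv⟩
    linarith [hmin j v h]
  have h2 : ¬ 1 ≤ (Finset.univ.filter fun j => β j = some b).card := by
    intro h
    obtain ⟨j, h⟩ := Finset.card_pos.mp h
    have := hmin j b (by simpa using h)
    linarith
  have h3 : ∃ j v, β j = some v := ⟨j, m, hj⟩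
  have h4 : sInf {v | ∃ j, β j = some v} = m := by
    apply IsLeast.csInf_eq
    exact ⟨⟨j, hj⟩, fun v ⟨j, h⟩ => hmin j v h⟩
  simp only [braPayoff]
  rw [if_neg h1, if_neg h2, if_pos h3, h4]
  constructor
  · intro l hl
    have hil : i < l := by
      by_contra hc
      rcases (not_lt.mp hc).lt_or_eq with h | h
      · have := bra_sep M blo bhi hle hsep l i h
        linarith [hi.1, hle l]
      · subst h; linarith [hi.1]
    have hex : ∃ ij : Fin M × Fin M,
            b ∈ Icc (blo ij.1) (bhi ij.1) ∧
            (∀ j v, β j = some v → v ∉ Icc (blo ij.1) (bhi ij.1)) ∧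
            ij.1 < ij.2 ∧ m = blo ij.2 := by
      refine ⟨(i, l), hi, ?_, hil, hl⟩
      intro j v h hv
      have := bra_sep M blo bhi hle hsep i l hil
      have := hmin j v h
      linarith [hv.2]
    rw [dif_pos hex]
    have h5 := hex.choose_spec.2.2.2
    have h6 : hex.choose.2 = l := by
      apply bra_inj M blo bhi hle hsep _ _ m
      · exact ⟨h5.ge, h5.le.trans (hle _)⟩
      · exact ⟨hl.ge, hl.le.trans (hle _)⟩
    rw [h6, ← hl]
  · intro h
    rw [dif_neg]
    rintro ⟨ij, _, _, _, h'⟩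
    exact h _ h'

/-- Behaviour of the payoff when the lowest opposing bid is `m`: there is a number `P`
(the payment to a strict lowest bidder) independent of the bid. -/
theorem bra_summary (M : ℕ) (blo bhi : Fin M → ℝ) (hle : ∀ i, blo i ≤ bhi i)
    (hsep : ∀ i : Fin M, ∀ h : i.val + 1 < M, bhi i < blo ⟨i.val + 1, h⟩)
    (N : ℕ) (q m : ℝ) (β : Fin N → Option ℝ) (j : Fin N) (hj : β j = some m)
    (hmin : ∀ j v, β j = some v → m ≤ v) :
    ∃ k P : ℝ, 0 ≤ k ∧
      (∀ b, m < b → braPayoff M blo bhi N q (some b) β = 0) ∧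
      braPayoff M blo bhi N q (some m) β = (m - q) / (k + 1) ∧
      (∀ b i, b < m → b ∈ Icc (blo i) (bhi i) →
        braPayoff M blo bhi N q (some b) β = P - q) ∧
      ((P = m ∧ ∀ l, m ≠ blo l) ∨
        ∃ l, m = blo l ∧ P = (m + k * prevHi M bhi l) / (k + 1)) := by
  by_cases h : ∃ l, m = blo l
  · obtain ⟨l, hl⟩ := h
    refine ⟨((Finset.univ.filter fun j => β j = some m).card : ℝ), _, by positivity,
      fun b hb => bra_gt M blo bhi N q b m β j hj hb, bra_eq M blo bhi N q m β j hj hmin,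
      fun b i hb hi => (bra_lt M blo bhi hle hsep N q b m β j hj hmin hb i hi).1 l hl,
      Or.inr ⟨l, hl, rfl⟩⟩
  · push Not at h
    refine ⟨((Finset.univ.filter fun j => β j = some m).card : ℝ), m, by positivity,
      fun b hb => bra_gt M blo bhi N q b m β j hj hb, bra_eq M blo bhi N q m β j hj hmin,
      fun b i hb hi => (bra_lt M blo bhi hle hsep N q b m β j hj hmin hb i hi).2 h,
      Or.inl ⟨rfl, h⟩⟩

theorem bra_cover (M : ℕ) (hM : 1 ≤ M) (blo bhi : Fin M → ℝ) (q : ℝ) (hq : 0 ≤ q)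
    (hqM : q < bhi ⟨M - 1, Nat.sub_lt hM Nat.one_pos⟩) :
    ∃ i, prevHi M bhi i ≤ q ∧ q < bhi i := by
  have hex : ∃ n, ∃ h : n < M, q < bhi ⟨n, h⟩ := ⟨M - 1, _, hqM⟩
  obtain ⟨h, h1⟩ := Nat.find_spec hex
  refine ⟨⟨Nat.find hex, h⟩, ?_, h1⟩
  unfold prevHi
  split_ifs with h0
  · exact hq
  · simp only at h0 ⊢
    have := Nat.find_min hex (m := Nat.find hex - 1) (by omega)
    push Not at this
    exact this _

/-- **Lemma 2.** In a bid-restricted auction, the strategy that bids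
one's quality on the bid intervals, bids `blo i` on the gap below interval `i`, and
abstains above `b̄_M`, is weakly dominant. -/
theorem stmt_5 (M : ℕ) (hM : 1 ≤ M) (blo bhi : Fin M → ℝ)
    (hlo0 : 0 ≤ blo ⟨0, hM⟩)
    (hhiM : bhi ⟨M - 1, Nat.sub_lt hM Nat.one_pos⟩ ≤ 1)
    (hle : ∀ i, blo i ≤ bhi i)
    (hsep : ∀ i : Fin M, ∀ h : i.val + 1 < M, bhi i < blo ⟨i.val + 1, h⟩)
    (N : ℕ)
    (βstar : ℝ → Option ℝ)
    (hβ1 : ∀ i : Fin M, ∀ q ∈ Ico (blo i) (bhi i), βstar q = some q)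
    (hβ2 : ∀ i : Fin M, ∀ q ∈ Ico (prevHi M bhi i) (blo i), βstar q = some (blo i))
    (hβ3 : ∀ q : ℝ, bhi ⟨M - 1, Nat.sub_lt hM Nat.one_pos⟩ ≤ q → βstar q = none) :
    ∀ q ∈ Icc (0:ℝ) 1, ∀ β : Fin N → Option ℝ,
      (∀ j, β j = none ∨ ∃ v, β j = some v ∧ ∃ i, v ∈ Icc (blo i) (bhi i)) →
      ∀ b : Option ℝ,
        (b = none ∨ ∃ v, b = some v ∧ ∃ i, v ∈ Icc (blo i) (bhi i)) →
        braPayoff M blo bhi N q b β ≤ braPayoff M blo bhi N q (βstar q) β := by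
  intro q hq β hβ b hb
  have hlast : ∀ i, bhi i ≤ bhi ⟨M - 1, Nat.sub_lt hM Nat.one_pos⟩ := by
    intro i
    by_cases h : i = ⟨M - 1, Nat.sub_lt hM Nat.one_pos⟩
    · rw [h]
    · have h' : i < ⟨M - 1, Nat.sub_lt hM Nat.one_pos⟩ := by
        rw [Fin.lt_def]
        have := i.isLt
        have : i.val ≠ M - 1 := fun hh => h (Fin.ext hh)
        simp only; omega
      exact (bra_sep M blo bhi hle hsep _ _ h').le.trans (hle _)
  -- description of the dominant bid
  have hstar : (βstar q = none ∧ bhi ⟨M - 1, Nat.sub_lt hM Nat.one_pos⟩ ≤ q) ∨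
      ∃ i, prevHi M bhi i ≤ q ∧ q < bhi i ∧ ((blo i ≤ q ∧ βstar q = some q) ∨
        (q < blo i ∧ βstar q = some (blo i))) := by
    rcases le_or_gt (bhi ⟨M - 1, Nat.sub_lt hM Nat.one_pos⟩) q with h | h
    · exact Or.inl ⟨hβ3 q h, h⟩
    · obtain ⟨i, h1, h2⟩ := bra_cover M hM blo bhi q hq.1 h
      refine Or.inr ⟨i, h1, h2, ?_⟩
      rcases le_or_gt (blo i) q with h3 | h3
      · exact Or.inl ⟨h3, hβ1 i q ⟨h3, h2⟩⟩
      · exact Or.inr ⟨h3, hβ2 i q ⟨h1, h3⟩⟩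
  have hnone : braPayoff M blo bhi N q none β = 0 := rfl
  by_cases he : ∀ j v, β j ≠ some v
  · have hE := fun b => bra_empty M hM blo bhi N q b β he
    rcases hstar with ⟨h1, h2⟩ | ⟨i, h1, h2, h3⟩
    · rw [h1, hnone]
      rcases hb with rfl | ⟨v, rfl, _⟩
      · rw [hnone]
      · rw [hE]; linarith
    · have : ∃ x, βstar q = some x := by
        rcases h3 with ⟨_, h⟩ | ⟨_, h⟩ <;> exact ⟨_, h⟩
      obtain ⟨x, hx⟩ := this
      rw [hx, hE]
      have := hlast i
      rcases hb with rfl | ⟨v, rfl, _⟩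
      · rw [hnone]; linarith
      · rw [hE]
  · have hm : ∃ m j, β j = some m ∧ ∀ j v, β j = some v → m ≤ v := by
      push Not at he
      have hfin : {v | ∃ j, β j = some v}.Finite := by
        have : (some '' {v | ∃ j, β j = some v}).Finite := by
          apply (Set.finite_range β).subset
          rintro _ ⟨v, ⟨j, h⟩, rfl⟩
          exact ⟨j, h⟩
        exact this.of_finite_image (Option.some_injective _).injOn
      obtain ⟨j, v, hv⟩ := he
      obtain ⟨m, ⟨j, hj⟩, hmin⟩ := hfin.exists_minimal ⟨v, j, hv⟩ |>.imp fun _ h => h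
      refine ⟨m, j, hj, fun j v h => ?_⟩
      rcases le_total m v with h' | h'
      · exact h'
      · exact hmin ⟨j, h⟩ h'
    obtain ⟨m, j, hj, hmin⟩ := hm
    obtain ⟨i0, hi0⟩ : ∃ i, m ∈ Icc (blo i) (bhi i) := by
      rcases hβ j with h | ⟨v, h, hv⟩
      · rw [h] at hj; cases hj
      · rw [h] at hj; cases hj; exact hv
    obtain ⟨k, P, hk, hgt, heq, hlt, hP⟩ :=
      bra_summary M blo bhi hle hsep N q m β j hj hmin
    have hk1 : 0 < k + 1 := by linarith
    -- the payment is at most `m` whenever a strictly lower allowed bid exists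
    have hPm : ∀ b i, b < m → b ∈ Icc (blo i) (bhi i) → P ≤ m := by
      intro b i hbm hbi
      rcases hP with ⟨h, _⟩ | ⟨l, hl, h⟩
      · exact h.le
      · have hil : i < l := by
          by_contra hc
          rcases (not_lt.mp hc).lt_or_eq with h | h
          · have := bra_sep M blo bhi hle hsep l i h
            linarith [hbi.1, hle l]
          · subst h; linarith [hbi.1]
        have := (bra_prev M blo bhi hle hsep i l hil).2
        rw [h, div_le_iff₀ hk1]
        nlinarith
    -- if `m ≤ q`, every bid gets at most zero
    have hneg : m ≤ q → braPayoff M blo bhi N q b β ≤ 0 := by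
      intro hmq
      rcases hb with rfl | ⟨v, rfl, i, hi⟩
      · rw [hnone]
      · rcases lt_trichotomy v m with h | h | h
        · rw [hlt v i h hi]; linarith [hPm v i h hi]
        · rw [h, heq]; exact div_nonpos_of_nonpos_of_nonneg (by linarith) hk1.le
        · rw [hgt v h]
    -- if the payment is high, winning outright is optimal
    have hwin : q ≤ m → (∀ l, m = blo l → q ≤ prevHi M bhi l) →
        braPayoff M blo bhi N q b β ≤ P - q := by
      intro hqm hprev
      have hd : 0 ≤ (m - q) / (k + 1) := div_nonneg (by linarith) hk1.le
      have hPd : (m - q) / (k + 1) ≤ P - q := by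
        rcases hP with ⟨h, _⟩ | ⟨l, hl, h⟩
        · rw [h, div_le_iff₀ hk1]; nlinarith
        · have := hprev l hl
          rw [h, div_sub' hk1.ne']
          apply div_le_div_of_nonneg_right _ hk1.le
          nlinarith
      rcases hb with rfl | ⟨v, rfl, i, hi⟩
      · rw [hnone]; linarith
      · rcases lt_trichotomy v m with h | h | h
        · rw [hlt v i h hi]
        · rw [h, heq]; exact hPd
        · rw [hgt v h]; linarith
    rcases hstar with ⟨h1, h2⟩ | ⟨i, h1, h2, ⟨h3, h4⟩ | ⟨h3, h4⟩⟩
    · rw [h1, hnone]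
      exact hneg (by linarith [hlast i0, hi0.2])
    · rw [h4]
      rcases lt_trichotomy m q with h | h | h
      · rw [hgt q h]; exact hneg h.le
      · have := hneg h.le
        rw [← h] at this heq ⊢
        rw [heq]; simpa using this
      · rw [hlt q i h ⟨h3, h2.le⟩]
        apply hwin h.le
        intro l hl
        have hil : i < l := by
          by_contra hc
          rcases (not_lt.mp hc).lt_or_eq with h' | h'
          · have := bra_sep M blo bhi hle hsep l i h'
            linarith [hle l]
          · subst h'; linarith
        linarith [(bra_prev M blo bhi hle hsep i l hil).1]
    · rw [h4]
      rcases lt_trichotomy m (blo i) with h | h | h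
      · rw [hgt _ h]
        apply hneg
        have hil : i0 < i := by
          by_contra hc
          rcases (not_lt.mp hc).lt_or_eq with h' | h'
          · have := bra_sep M blo bhi hle hsep i i0 h'
            linarith [hle i, hi0.1]
          · subst h'; linarith [hi0.1]
        linarith [(bra_prev M blo bhi hle hsep i0 i hil).1, hi0.2]
      · rw [← h, heq]
        have hd : 0 ≤ (m - q) / (k + 1) := div_nonneg (by linarith) hk1.le
        rcases hb with rfl | ⟨v, rfl, i', hi'⟩
        · rw [hnone]; exact hd
        · rcases lt_trichotomy v m with hv | hv | hv
          · rw [hlt v i' hv hi']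
            rcases hP with ⟨_, hn⟩ | ⟨l, hl, hPl⟩
            · exact absurd h (hn i)
            · have hli : l = i := bra_inj M blo bhi hle hsep l i m
                ⟨hl.ge, hl.le.trans (hle _)⟩ ⟨h.ge, h.le.trans (hle _)⟩
              subst hli
              rw [hPl, div_sub' hk1.ne']
              apply div_le_div_of_nonneg_right _ hk1.le
              nlinarith
          · rw [hv, heq]
          · rw [hgt v hv]; exact hd
      · rw [hlt _ i h ⟨le_rfl, hle i⟩]
        apply hwin (by linarith)
        intro l hl
        have hil : i < l := by
          by_contra hc
          rcases (not_lt.mp hc).lt_or_eq with h' | h'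
          · have := bra_sep M blo bhi hle hsep l i h'
            linarith [hle l]
          · subst h'; linarith
        linarith [(bra_prev M blo bhi hle hsep i l hil).1]
end

section
/- Let n ≥ 2 and let { [s̲_i, s̄_i) }_{i=1}^L be pairwise disjoint intervals contained in [0, S̄] for some S̄ ∈ (0,1], ordered so that s̄_i ≤ s̲_{i+1}. Consider n sellers with i.i.d. Uniform[0,1] quality quantiles, each of whom bids according to β: β(t) = t if t ∈ [0, S̄) \ ∪_{i=1}^L [s̲_i, s̄_i), β(t) = s̄_i if t ∈ [s̲_i, s̄_i), and β(t) = ⊥ (no bid) if t ≥ S̄; the seller with the lowest submitted bid wins, ties among k+1 lowest bidders are broken uniformly (each wins with probability 1/(k+1)), and sellers who do not bid never win. Then the probability that a seller with quantile s wins equals: (1−s)^{n−1} if s ∈ [0, S̄) \ ∪_{i=1}^L [s̲_i, s̄_i) and s is not equal to any s̄_i; (∫_{s̲_i}^{s̄_i} (1−t)^{n−1} dt)/(s̄_i − s̲_i) if s ∈ [s̲_i, s̄_i) for some i; and 0 if s > S̄. -/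
open scoped Classical
open MeasureTheory Set

/-- Conditional winning indicator under lowest-bid-wins with uniform tie-breaking:
given the bidding strategy `β` (with `none` = abstain), a seller with quantile `s`
facing opponents' quantiles `t` gets `0` if she abstains or some opponent bids
strictly below her, and otherwise wins with probability `1/(k+1)` where `k` is the
number of opponents whose bid equals hers. -/
noncomputable def tieWin (N : ℕ) (β : ℝ → Option ℝ) (s : ℝ) (t : Fin N → ℝ) : ℝ :=
  match β s with
  | none => 0
  | some bb =>
    if ∃ j v, β (t j) = some v ∧ v < bb then 0
    else 1 / (((Finset.univ.filter fun j => β (t j) = some bb).card : ℝ) + 1)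

/-- The probability that a seller with quantile `s` wins against `N` i.i.d.
`Uniform[0,1]` opponents, all bidding according to `β`. -/
noncomputable def winProb (N : ℕ) (β : ℝ → Option ℝ) (s : ℝ) : ℝ :=
  ∫ t : Fin N → ℝ, tieWin N β s t
    ∂(Measure.pi fun _ => volume.restrict (Icc (0:ℝ) 1))

noncomputable def hfun (a b x u : ℝ) : ℝ := if u < a then 0 else if u < b then x else 1

lemma hfun_meas (a b : ℝ) : Measurable (fun p : ℝ × ℝ => hfun a b p.1 p.2) := by
  unfold hfun
  refine Measurable.ite (measurableSet_lt measurable_snd measurable_const) measurable_const ?_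
  exact Measurable.ite (measurableSet_lt measurable_snd measurable_const) measurable_fst
    measurable_const

lemma hfun_nonneg (a b x u : ℝ) (hx : 0 ≤ x) : 0 ≤ hfun a b x u := by
  unfold hfun; split_ifs <;> linarith

lemma hfun_le (a b x u : ℝ) (hx : x ≤ 1) : hfun a b x u ≤ 1 := by
  unfold hfun; split_ifs <;> linarith

lemma hfun_int (a b x : ℝ) (ha : 0 ≤ a) (hab : a ≤ b) (hb : b ≤ 1) :
    ∫ u in Icc (0:ℝ) 1, hfun a b x u = (b - a) * x + (1 - b) := by
  have e : ∀ u ∈ Icc (0:ℝ) 1, hfun a b x u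
      = (Ico a b).indicator (fun _ => x) u + (Icc b 1).indicator (fun _ => (1:ℝ)) u := by
    intro u hu
    simp only [hfun, indicator, mem_Ico, mem_Icc]
    have := hu.2
    split_ifs <;> first | (exfalso; grind) | simp
  rw [setIntegral_congr_fun measurableSet_Icc e]
  rw [integral_add]
  · rw [setIntegral_indicator measurableSet_Ico, setIntegral_indicator measurableSet_Icc]
    have h1 : Icc (0:ℝ) 1 ∩ Ico a b = Ico a b := by
      ext u; simp only [mem_inter_iff, mem_Icc, mem_Ico]; grind
    have h2 : Icc (0:ℝ) 1 ∩ Icc b 1 = Icc b 1 := by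
      ext u; simp only [mem_inter_iff, mem_Icc]; grind
    rw [h1, h2]
    simp [hab, hb]
  · exact (integrable_const x).indicator measurableSet_Ico
  · exact (integrable_const (1:ℝ)).indicator measurableSet_Icc

lemma prod_int (N : ℕ) (a b : ℝ) (hab : a ≤ b) (t : Fin N → ℝ) :
    ∫ x in Ioc (0:ℝ) 1, ∏ j, hfun a b x (t j)
      = if ∃ j, t j < a then 0 else
        1 / (((Finset.univ.filter fun j => a ≤ t j ∧ t j < b).card : ℝ) + 1) := by
  split_ifs with h
  · obtain ⟨j, hj⟩ := h
    have : ∀ x, ∏ j, hfun a b x (t j) = 0 := fun x =>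
      Finset.prod_eq_zero (Finset.mem_univ j) (by simp [hfun, hj])
    simp [this]
  · push Not at h
    have : ∀ x, ∏ j, hfun a b x (t j)
        = x ^ (Finset.univ.filter fun j => a ≤ t j ∧ t j < b).card := by
      intro x
      rw [← Finset.prod_const, Finset.prod_filter]
      refine Finset.prod_congr rfl fun j _ => ?_
      simp [hfun, h j, not_lt.2 (h j)]
    simp_rw [this]
    rw [← intervalIntegral.integral_of_le zero_le_one, integral_pow]
    simp

lemma key (N : ℕ) (β : ℝ → Option ℝ) (s a b : ℝ) (ha : 0 ≤ a) (hab : a ≤ b) (hb : b ≤ 1)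
    (hs : β s = some b)
    (h1 : ∀ u ∈ Icc (0:ℝ) 1, u < a → ∃ v, β u = some v ∧ v < b)
    (h2 : ∀ u ∈ Icc (0:ℝ) 1, a ≤ u → u < b → β u = some b)
    (h3 : ∀ u ∈ Icc (0:ℝ) 1, b < u → ∀ v, β u = some v → b < v) :
    winProb N β s = ∫ x in (0:ℝ)..1, ((b - a) * x + (1 - b)) ^ N := by
  have hae1 : ∀ᵐ u ∂(volume.restrict (Icc (0:ℝ) 1)), u ∈ Icc (0:ℝ) 1 ∧ u ≠ b := by
    refine (ae_restrict_mem measurableSet_Icc).and (ae_restrict_of_ae ?_)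
    exact Measure.ae_ne volume b
  have hae : ∀ᵐ t ∂(Measure.pi fun _ : Fin N => volume.restrict (Icc (0:ℝ) 1)),
      ∀ j, t j ∈ Icc (0:ℝ) 1 ∧ t j ≠ b := by
    rw [Filter.eventually_all]
    intro j
    exact (Measure.tendsto_eval_ae_ae
      (μ := fun _ : Fin N => volume.restrict (Icc (0:ℝ) 1)) (i := j)).eventually hae1
  have step : winProb N β s = ∫ t : Fin N → ℝ, (∫ x in Ioc (0:ℝ) 1, ∏ j, hfun a b x (t j))
      ∂(Measure.pi fun _ => volume.restrict (Icc (0:ℝ) 1)) := by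
    unfold winProb
    refine integral_congr_ae ?_
    filter_upwards [hae] with t ht
    rw [prod_int N a b hab]
    simp only [tieWin, hs]
    have e1 : (∃ j v, β (t j) = some v ∧ v < b) ↔ ∃ j, t j < a := by
      constructor
      · rintro ⟨j, v, hv, hvb⟩
        refine ⟨j, ?_⟩
        by_contra hc
        push Not at hc
        rcases lt_or_gt_of_ne (ht j).2 with h | h
        · have := h2 _ (ht j).1 hc h
          rw [hv] at this
          simp at this
          linarith
        · have := h3 _ (ht j).1 h v hv
          linarith
      · rintro ⟨j, hj⟩
        exact ⟨j, h1 _ (ht j).1 hj⟩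
    have e2 : ∀ j, β (t j) = some b ↔ a ≤ t j ∧ t j < b := by
      intro j
      constructor
      · intro h
        constructor
        · by_contra hc
          obtain ⟨v, hv, hvb⟩ := h1 _ (ht j).1 (not_le.1 hc)
          rw [h] at hv
          simp at hv
          linarith
        · by_contra hc
          have := h3 _ (ht j).1 (lt_of_le_of_ne (not_lt.1 hc) (ht j).2.symm) b h
          exact lt_irrefl _ this
      · rintro ⟨h, h'⟩
        exact h2 _ (ht j).1 h h'
    simp only [e1, e2]
  rw [step, integral_integral_swap, intervalIntegral.integral_of_le zero_le_one]
  · refine integral_congr_ae (Filter.Eventually.of_forall fun x => ?_)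
    simp only
    rw [integral_fintype_prod_eq_prod (fun (_ : Fin N) u => hfun a b x u)]
    rw [hfun_int a b x ha hab hb]
    simp
  · refine Integrable.of_bound (C := 1) ?_ ?_
    · refine Measurable.aestronglyMeasurable ?_
      unfold Function.uncurry
      refine Finset.measurable_prod _ fun j _ => ?_
      exact (hfun_meas a b).comp
        (measurable_snd.prodMk ((measurable_pi_apply j).comp measurable_fst))
    · have : ∀ᵐ x ∂(volume.restrict (Ioc (0:ℝ) 1)), x ∈ Ioc (0:ℝ) 1 :=
        ae_restrict_mem measurableSet_Ioc
      filter_upwards [Measure.quasiMeasurePreserving_snd.ae this] with p hp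
      have hn : 0 ≤ ∏ j, hfun a b p.2 (p.1 j) :=
        Finset.prod_nonneg fun j _ => hfun_nonneg _ _ _ _ hp.1.le
      simp only [Function.uncurry]
      rw [Real.norm_of_nonneg hn]
      exact Finset.prod_le_one (fun j _ => hfun_nonneg _ _ _ _ hp.1.le)
        fun j _ => hfun_le _ _ _ _ hp.2

/-- Under the bid-restricted-auction strategy (bid one's quantile on
non-pooling intervals, bid `shi i` on the pooling interval `[slo i, shi i)`, abstain
at or above `S̄`), the interim winning probability is `(1−s)^{n−1}` on non-pooling
quantiles, the average of `(1−t)^{n−1}` over the pooling interval on pooling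
quantiles, and `0` above `S̄`. -/
theorem stmt_6 (n : ℕ) (hn : 2 ≤ n) (L : ℕ)
    (slo shi : Fin L → ℝ)
    (Sbar : ℝ) (hSbar_pos : 0 < Sbar) (hSbar_le : Sbar ≤ 1)
    (hle : ∀ i, slo i ≤ shi i)
    (hsub : ∀ i, Ico (slo i) (shi i) ⊆ Icc 0 Sbar)
    (hord : ∀ i : Fin L, ∀ h : i.val + 1 < L, shi i ≤ slo ⟨i.val + 1, h⟩)
    (β : ℝ → Option ℝ)
    (hβ1 : ∀ t ∈ Ico (0:ℝ) Sbar \ ⋃ i, Ico (slo i) (shi i), β t = some t)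
    (hβ2 : ∀ i : Fin L, ∀ t ∈ Ico (slo i) (shi i), β t = some (shi i))
    (hβ3 : ∀ t : ℝ, Sbar ≤ t → β t = none) :
    (∀ s ∈ Ico (0:ℝ) Sbar \ ⋃ i, Ico (slo i) (shi i), (∀ i, s ≠ shi i) →
        winProb (n - 1) β s = (1 - s) ^ (n - 1)) ∧
    (∀ i : Fin L, ∀ s ∈ Ico (slo i) (shi i),
        winProb (n - 1) β s
          = (∫ t in slo i..shi i, (1 - t) ^ (n - 1)) / (shi i - slo i)) ∧
    (∀ s ∈ Icc (0:ℝ) 1, Sbar < s → winProb (n - 1) β s = 0) := by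
  have hsb : ∀ i, slo i < shi i → 0 ≤ slo i ∧ shi i ≤ Sbar := by
    intro i hi
    refine ⟨(hsub i (left_mem_Ico.2 hi)).1, ?_⟩
    by_contra hc
    push Not at hc
    have h1 : max (slo i) ((Sbar + shi i) / 2) ∈ Ico (slo i) (shi i) :=
      ⟨le_max_left _ _, max_lt hi (by linarith)⟩
    have := (hsub i h1).2
    have := le_max_right (slo i) ((Sbar + shi i) / 2)
    linarith
  have hordlt : ∀ k : ℕ, ∀ i j : Fin L, j.val = i.val + 1 + k → shi i ≤ slo j := by
    intro k
    induction k with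
    | zero =>
      intro i j hj
      have h := hord i (by have := j.2; omega)
      have e : (⟨i.val + 1, by have := j.2; omega⟩ : Fin L) = j := Fin.ext (by simp [hj])
      rwa [e] at h
    | succ k ih =>
      intro i j hj
      have hlt : i.val + 1 + k < L := by have := j.2; omega
      have h := ih i ⟨i.val + 1 + k, hlt⟩ rfl
      have h' := hord ⟨i.val + 1 + k, hlt⟩ (by have := j.2; simp only; omega)
      have e : (⟨i.val + 1 + k + 1, by have := j.2; omega⟩ : Fin L) = j :=
        Fin.ext (by simp only; omega)
      rw [e] at h'
      exact h.trans ((hle _).trans h')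
  have hord' : ∀ i j : Fin L, i < j → shi i ≤ slo j := fun i j hij =>
    hordlt (j.val - i.val - 1) i j (by have : i.val < j.val := hij; omega)
  -- bids are at least own quantile
  have hge : ∀ u, 0 ≤ u → ∀ v, β u = some v → u ≤ v := by
    intro u hu v hv
    by_cases hS : Sbar ≤ u
    · rw [hβ3 u hS] at hv; cases hv
    by_cases hm : u ∈ ⋃ i, Ico (slo i) (shi i)
    · obtain ⟨i, hi⟩ := mem_iUnion.1 hm
      rw [hβ2 i u hi] at hv
      cases hv
      exact hi.2.le
    · rw [hβ1 u ⟨⟨hu, not_le.1 hS⟩, hm⟩] at hv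
      cases hv
      exact le_rfl
  refine ⟨?_, ?_, ?_⟩
  · intro s hs hne
    rw [key (n - 1) β s s s hs.1.1 le_rfl (hs.1.2.le.trans hSbar_le) (hβ1 s hs)]
    · simp
    · intro u hu hus
      by_cases hm : u ∈ ⋃ i, Ico (slo i) (shi i)
      · obtain ⟨i, hi⟩ := mem_iUnion.1 hm
        refine ⟨shi i, hβ2 i u hi, ?_⟩
        refine lt_of_le_of_ne ?_ (hne i).symm
        by_contra hc
        exact hs.2 (mem_iUnion.2 ⟨i, hi.1.trans hus.le, not_le.1 hc⟩)
      · exact ⟨u, hβ1 u ⟨⟨hu.1, hus.trans hs.1.2⟩, hm⟩, hus⟩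
    · intro u _ h h'
      exact absurd h' (not_lt.2 h)
    · intro u hu h v hv
      exact h.trans_le (hge u hu.1 v hv)
  · intro i s hs
    have hi : slo i < shi i := hs.1.trans_lt hs.2
    obtain ⟨h0, hS⟩ := hsb i hi
    rw [key (n - 1) β s (slo i) (shi i) h0 hi.le (hS.trans hSbar_le) (hβ2 i s hs)]
    · have hd : shi i - slo i ≠ 0 := by linarith
      rw [intervalIntegral.integral_comp_mul_add (fun y => y ^ (n - 1)) hd,
        intervalIntegral.integral_comp_sub_left (fun y => y ^ (n - 1)) 1]
      have e1 : (shi i - slo i) * 0 + (1 - shi i) = 1 - shi i := by ring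
      have e2 : (shi i - slo i) * 1 + (1 - shi i) = 1 - slo i := by ring
      rw [e1, e2, smul_eq_mul, div_eq_inv_mul]
    · intro u hu hua
      by_cases hm : u ∈ ⋃ i, Ico (slo i) (shi i)
      · obtain ⟨j, hj⟩ := mem_iUnion.1 hm
        refine ⟨shi j, hβ2 j u hj, ?_⟩
        rcases lt_trichotomy i j with h | h | h
        · have := hord' i j h
          have := hj.1
          linarith
        · subst h
          exact absurd hj.1 (not_le.2 hua)
        · have := hord' j i h
          linarith
      · exact ⟨u, hβ1 u ⟨⟨hu.1, by linarith⟩, hm⟩, by linarith⟩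
    · intro u _ h h'
      exact hβ2 i u ⟨h, h'⟩
    · intro u hu h v hv
      exact h.trans_le (hge u hu.1 v hv)
  · intro s _ hs
    simp [winProb, tieWin, hβ3 s hs.le]
end

section
/- Let n ≥ 2 and let g̃ : [0,1] → ℝ be a bounded measurable nonincreasing function. Set S̄ = sup{ s ∈ [0,1] : g̃(s) ≥ 0 } (with sup ∅ = 0). Then the function P̂(s) = (1−s)^{n−1} for s ≤ S̄ and P̂(s) = 0 for s > S̄ is feasible and maximizes ∫_0^1 g̃(s) P(s) ds over all feasible P. -/
open MeasureTheory Set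

/-- A quantile interim allocation is feasible if it maps `[0,1]` into `[0,1]`, is
nonincreasing, and is weakly majorized by `s ↦ (1−s)^{n−1}` (Border's condition). -/
def Feasible (n : ℕ) (P : ℝ → ℝ) : Prop :=
  (∀ s ∈ Icc (0:ℝ) 1, P s ∈ Icc (0:ℝ) 1) ∧
  AntitoneOn P (Icc (0:ℝ) 1) ∧
  ∀ x ∈ Icc (0:ℝ) 1, (∫ t in (0:ℝ)..x, P t) ≤ ∫ t in (0:ℝ)..x, (1 - t) ^ (n - 1)

lemma initial_seg (A : Set ℝ) (hA : A ⊆ Ioc 0 1)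
    (hdown : ∀ s ∈ A, ∀ t, 0 < t → t ≤ s → t ∈ A) :
    ∃ x ∈ Icc (0:ℝ) 1, A = Ioc 0 x ∨ A = Ioo 0 x := by
  rcases A.eq_empty_or_nonempty with h | ⟨a, ha⟩
  · exact ⟨0, by simp, Or.inl (by simp [h])⟩
  have hb : BddAbove A := ⟨1, fun s hs => (hA hs).2⟩
  have h0 : 0 ≤ sSup A := (hA ha).1.le.trans (le_csSup hb ha)
  refine ⟨sSup A, ⟨h0, csSup_le ⟨a, ha⟩ fun s hs => (hA hs).2⟩, ?_⟩
  by_cases hx : sSup A ∈ A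
  · left
    ext s
    exact ⟨fun hs => ⟨(hA hs).1, le_csSup hb hs⟩, fun hs => hdown _ hx _ hs.1 hs.2⟩
  · right
    ext s
    refine ⟨fun hs => ⟨(hA hs).1, lt_of_le_of_ne (le_csSup hb hs) ?_⟩, fun hs => ?_⟩
    · rintro rfl
      exact hx hs
    · obtain ⟨b, hbA, hlt⟩ := exists_lt_of_lt_csSup ⟨a, ha⟩ hs.2
      exact hdown _ hbA _ hs.1 hlt.le

lemma key_s7 (f h : ℝ → ℝ) (C : ℝ) (hf : IntervalIntegrable f volume 0 1) (hm : Measurable h)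
    (h0 : ∀ s ∈ Icc (0:ℝ) 1, 0 ≤ h s) (hC : ∀ s ∈ Icc (0:ℝ) 1, h s ≤ C)
    (hanti : AntitoneOn h (Icc (0:ℝ) 1))
    (hpos : ∀ x ∈ Icc (0:ℝ) 1, 0 ≤ ∫ t in (0:ℝ)..x, f t) :
    0 ≤ ∫ s in (0:ℝ)..1, h s * f s := by
  have hfi : Integrable f (volume.restrict (Ioc (0:ℝ) 1)) :=
    (intervalIntegrable_iff_integrableOn_Ioc_of_le zero_le_one).1 hf
  set μ : Measure ℝ := volume.restrict (Ioc (0:ℝ) 1) with hμ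
  set ν : Measure ℝ := volume.restrict (Ioc (0:ℝ) C) with hν
  let S : Set (ℝ × ℝ) := {p | p.2 < h p.1}
  have hS : MeasurableSet S := measurableSet_lt measurable_snd (hm.comp measurable_fst)
  have hF : Integrable (S.indicator (fun p : ℝ × ℝ => f p.1)) (μ.prod ν) :=
    (hfi.comp_fst ν).indicator hS
  have swap := integral_integral_swap (f := fun s c => S.indicator (fun p : ℝ × ℝ => f p.1) (s, c)) hF
  have e1 : ∫ s in (0:ℝ)..1, h s * f s
      = ∫ s, ∫ c, S.indicator (fun p : ℝ × ℝ => f p.1) (s, c) ∂ν ∂μ := by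
    rw [intervalIntegral.integral_of_le zero_le_one]
    refine setIntegral_congr_fun measurableSet_Ioc fun s hs => ?_
    have hs' := Ioc_subset_Icc_self hs
    have : (fun c => S.indicator (fun p : ℝ × ℝ => f p.1) (s, c))
        = (Iio (h s)).indicator (fun _ => f s) := by
      ext c
      simp [S, indicator]
    simp only [this]
    rw [integral_indicator measurableSet_Iio, setIntegral_const, measureReal_def, hν,
      Measure.restrict_apply measurableSet_Iio]
    have : Iio (h s) ∩ Ioc 0 C = Ioo 0 (h s) := by
      ext c
      have := hC s hs'
      simp only [mem_inter_iff, mem_Iio, mem_Ioc, mem_Ioo]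
      constructor
      · rintro ⟨a, b, c⟩; exact ⟨b, a⟩
      · rintro ⟨a, b⟩; exact ⟨b, a, by linarith⟩
    rw [this, Real.volume_Ioo, sub_zero, ENNReal.toReal_ofReal (h0 s hs'), smul_eq_mul]
  rw [e1, swap]
  refine integral_nonneg fun c => ?_
  have hT : MeasurableSet {s | c < h s} := measurableSet_lt measurable_const hm
  have : (fun s => S.indicator (fun p : ℝ × ℝ => f p.1) (s, c))
      = {s | c < h s}.indicator f := by
    ext s
    simp [S, indicator]
  simp only [this, Pi.zero_apply]
  rw [integral_indicator hT, hμ, Measure.restrict_restrict hT]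
  obtain ⟨x, hx, hA⟩ := initial_seg ({s | c < h s} ∩ Ioc 0 1) inter_subset_right (by
    rintro s ⟨hs, hs1⟩ t ht hts
    refine ⟨lt_of_lt_of_le (show c < h s from hs) (show h s ≤ h t from ?_), ht, hts.trans hs1.2⟩
    exact hanti ⟨ht.le, hts.trans hs1.2⟩ ⟨hs1.1.le, hs1.2⟩ hts)
  have := hpos x hx
  rw [intervalIntegral.integral_of_le hx.1] at this
  rcases hA with hA | hA
  · rw [hA]; exact this
  · rw [hA, ← integral_Ioc_eq_integral_Ioo]; exact this

/-- If the quantile virtual surplus `g̃` is nonincreasing, then the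
cutoff allocation `P̂(s) = (1−s)^{n−1}` for `s ≤ S̄` (where `S̄ = sup{s : g̃(s) ≥ 0}`,
with `sup ∅ = 0`) and `P̂(s) = 0` for `s > S̄` is feasible and maximizes `∫₀¹ g̃ P`. -/
theorem stmt_7 (n : ℕ) (hn : 2 ≤ n)
    (gt : ℝ → ℝ) (hgt_meas : Measurable gt)
    (hgt_bdd : ∃ C, ∀ s ∈ Icc (0:ℝ) 1, |gt s| ≤ C)
    (hgt_anti : AntitoneOn gt (Icc (0:ℝ) 1))
    (Sbar : ℝ) (hSbar : Sbar = sSup {s ∈ Icc (0:ℝ) 1 | 0 ≤ gt s})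
    (Phat : ℝ → ℝ)
    (hPhat1 : ∀ s ∈ Icc (0:ℝ) 1, s ≤ Sbar → Phat s = (1 - s) ^ (n - 1))
    (hPhat2 : ∀ s ∈ Icc (0:ℝ) 1, Sbar < s → Phat s = 0) :
    Feasible n Phat ∧
      ∀ P : ℝ → ℝ, Feasible n P →
        (∫ s in (0:ℝ)..1, gt s * P s) ≤ ∫ s in (0:ℝ)..1, gt s * Phat s := by
  have hQ01 : ∀ s ∈ Icc (0:ℝ) 1, (1 - s) ^ (n - 1) ∈ Icc (0:ℝ) 1 := fun s hs =>
    ⟨pow_nonneg (by linarith [hs.2]) _,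
      pow_le_one₀ (by linarith [hs.2]) (by linarith [hs.1])⟩
  have hQc : Continuous fun s : ℝ => (1 - s) ^ (n - 1) := by fun_prop
  have hle : ∀ s ∈ Icc (0:ℝ) 1, 0 ≤ Phat s ∧ Phat s ≤ (1 - s) ^ (n - 1) := by
    intro s hs
    rcases le_or_gt s Sbar with h | h
    · rw [hPhat1 s hs h]; exact ⟨(hQ01 s hs).1, le_rfl⟩
    · rw [hPhat2 s hs h]; exact ⟨le_rfl, (hQ01 s hs).1⟩
  have hanti : AntitoneOn Phat (Icc (0:ℝ) 1) := by
    intro a ha b hb hab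
    rcases le_or_gt b Sbar with h | h
    · rw [hPhat1 b hb h, hPhat1 a ha (hab.trans h)]
      exact pow_le_pow_left₀ (by linarith [hb.2]) (by linarith) _
    · rw [hPhat2 b hb h]; exact (hle a ha).1
  have hint : ∀ P : ℝ → ℝ, AntitoneOn P (Icc (0:ℝ) 1) → ∀ x ∈ Icc (0:ℝ) 1,
      IntervalIntegrable P volume 0 x := fun P hP x hx =>
    AntitoneOn.intervalIntegrable (by
      rw [uIcc_of_le hx.1]; exact hP.mono (Icc_subset_Icc_right hx.2))
  have h1 : (1:ℝ) ∈ Icc (0:ℝ) 1 := by simp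
  refine ⟨⟨fun s hs => ⟨(hle s hs).1, (hle s hs).2.trans (hQ01 s hs).2⟩, hanti, ?_⟩, ?_⟩
  · intro x hx
    exact intervalIntegral.integral_mono_on hx.1 (hint _ hanti x hx)
      (hQc.intervalIntegrable _ _) fun s hs => (hle s ⟨hs.1, hs.2.trans hx.2⟩).2
  · rintro P ⟨hP01, hPanti, hPmaj⟩
    obtain ⟨C, hC⟩ := hgt_bdd
    have hmaxanti : AntitoneOn (fun s => max (gt s) 0) (Icc (0:ℝ) 1) :=
      fun a ha b hb hab => max_le_max (hgt_anti ha hb hab) le_rfl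
    have hmul : ∀ u v : ℝ → ℝ, (∀ s ∈ Icc (0:ℝ) 1, |u s| ≤ C) → Measurable u →
        IntervalIntegrable v volume 0 1 →
        IntervalIntegrable (fun s => u s * v s) volume 0 1 := by
      intro u v hu hum hv
      rw [intervalIntegrable_iff_integrableOn_Ioc_of_le zero_le_one] at hv ⊢
      refine Integrable.bdd_mul (c := C) hv hum.aestronglyMeasurable ?_
      exact (ae_restrict_iff' measurableSet_Ioc).2
        (Filter.Eventually.of_forall fun s hs => hu s (Ioc_subset_Icc_self hs))
    have hmm : Measurable fun s => max (gt s) 0 := hgt_meas.max measurable_const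
    have hmb : ∀ s ∈ Icc (0:ℝ) 1, |max (gt s) 0| ≤ C := by
      intro s hs
      have := abs_le.1 (hC s hs)
      rw [abs_of_nonneg (le_max_right _ _)]
      exact max_le this.2 ((abs_nonneg _).trans (hC s hs))
    have hPi := hint P hPanti 1 h1
    have hQi : IntervalIntegrable (fun s : ℝ => (1 - s) ^ (n - 1)) volume 0 1 :=
      hQc.intervalIntegrable _ _
    have hk := key_s7 (fun s => (1 - s) ^ (n - 1) - P s) (fun s => max (gt s) 0) C
      (hQi.sub hPi) hmm (fun s _ => le_max_right _ _)
      (fun s hs => (le_abs_self _).trans (hmb s hs)) hmaxanti (by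
        intro x hx
        rw [intervalIntegral.integral_sub (hQc.intervalIntegrable _ _) (hint P hPanti x hx)]
        linarith [hPmaj x hx])
    have hk2 : ∫ s in (0:ℝ)..1, max (gt s) 0 * P s
        ≤ ∫ s in (0:ℝ)..1, max (gt s) 0 * (1 - s) ^ (n - 1) := by
      simp only [mul_sub] at hk
      rw [intervalIntegral.integral_sub (hmul _ _ hmb hmm hQi) (hmul _ _ hmb hmm hPi)] at hk
      linarith
    have hk1 : ∫ s in (0:ℝ)..1, gt s * P s ≤ ∫ s in (0:ℝ)..1, max (gt s) 0 * P s :=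
      intervalIntegral.integral_mono_on zero_le_one (hmul _ _ hC hgt_meas hPi)
        (hmul _ _ hmb hmm hPi) fun s hs =>
          mul_le_mul_of_nonneg_right (le_max_left _ _) (hP01 s hs).1
    refine hk1.trans (hk2.trans (le_of_eq ?_))
    have hbd : BddAbove {s ∈ Icc (0:ℝ) 1 | 0 ≤ gt s} := ⟨1, fun s hs => hs.1.2⟩
    have hae : ∀ᵐ s : ℝ, s ≠ Sbar := by simp [ae_iff]
    refine intervalIntegral.integral_congr_ae ?_
    filter_upwards [hae] with s hsne hs
    rw [uIoc_of_le zero_le_one] at hs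
    have hs' := Ioc_subset_Icc_self hs
    rcases lt_or_gt_of_ne hsne with h | h
    · rw [hPhat1 s hs' h.le]
      have hne : {s ∈ Icc (0:ℝ) 1 | 0 ≤ gt s}.Nonempty := by
        by_contra hcon
        rw [not_nonempty_iff_eq_empty] at hcon
        rw [hcon, Real.sSup_empty] at hSbar
        linarith [hs.1]
      rw [hSbar] at h
      obtain ⟨b, hb, hlt⟩ := exists_lt_of_lt_csSup hne h
      rw [max_eq_left (hb.2.trans (hgt_anti hs' hb.1 hlt.le))]
    · rw [hPhat2 s hs' h]
      have : gt s ≤ 0 := by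
        by_contra hcon
        push Not at hcon
        have := le_csSup hbd (show s ∈ {s ∈ Icc (0:ℝ) 1 | 0 ≤ gt s} from ⟨hs', hcon.le⟩)
        linarith
      rw [max_eq_right this]; simp
end

section
/- Let n ≥ 2 and let g̃ : [0,1] → ℝ be a bounded measurable nondecreasing function with ∫_0^1 g̃(s) ds ≥ 0. Then the constant function P̂ ≡ 1/n is feasible and maximizes ∫_0^1 g̃(s) P(s) ds over all feasible P. -/
open MeasureTheory Set

theorem pow_integral (n : ℕ) (hn : 2 ≤ n) (x : ℝ) :
    ∫ t in (0:ℝ)..x, (1 - t) ^ (n - 1) = (1 - (1 - x) ^ n) / n := by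
  obtain ⟨k, rfl⟩ : ∃ k, n = k + 1 := ⟨n - 1, by omega⟩
  rw [intervalIntegral.integral_comp_sub_left (fun t : ℝ => t ^ (k + 1 - 1)) 1]
  simp

theorem chebyshev_aux (g P : ℝ → ℝ) (hg : MonotoneOn g (Icc (0:ℝ) 1))
    (hP : AntitoneOn P (Icc (0:ℝ) 1)) :
    (∫ s in (0:ℝ)..1, g s * P s) ≤ (∫ s in (0:ℝ)..1, g s) * ∫ s in (0:ℝ)..1, P s := by
  have hu : uIcc (0:ℝ) 1 = Icc 0 1 := uIcc_of_le zero_le_one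
  have hgi : IntervalIntegrable g volume 0 1 := MonotoneOn.intervalIntegrable (by rwa [hu])
  have hPi : IntervalIntegrable P volume 0 1 := AntitoneOn.intervalIntegrable (by rwa [hu])
  have h0 : (0:ℝ) ∈ Icc (0:ℝ) 1 := by simp
  have h1 : (1:ℝ) ∈ Icc (0:ℝ) 1 := by simp
  have hgP : IntervalIntegrable (fun s => g s * P s) volume 0 1 := by
    rw [intervalIntegrable_iff_integrableOn_Ioc_of_le zero_le_one] at *
    refine Integrable.bdd_mul (c := |g 0| + |g 1|) hPi hgi.aestronglyMeasurable ?_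
    refine (ae_restrict_mem measurableSet_Ioc).mono fun s hs => ?_
    have hs' := Ioc_subset_Icc_self hs
    have a := hg h0 hs' hs'.1
    have b := hg hs' h1 hs'.2
    rw [Real.norm_eq_abs, abs_le]
    constructor
    · linarith [neg_abs_le (g 0), abs_nonneg (g 1)]
    · linarith [le_abs_self (g 1), abs_nonneg (g 0)]
  set m := ∫ s in (0:ℝ)..1, P s with hm
  have hP0 : m ≤ P 0 := by
    have := intervalIntegral.integral_mono_on (f := P) (g := fun _ => P 0) zero_le_one hPi
      intervalIntegrable_const (fun s hs => hP h0 hs hs.1)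
    simpa using this
  let S : Set ℝ := {s | s ∈ Icc (0:ℝ) 1 ∧ m ≤ P s}
  have hS0 : (0:ℝ) ∈ S := ⟨h0, hP0⟩
  have hSb : BddAbove S := ⟨1, fun s hs => hs.1.2⟩
  let c := sSup S
  have hc : c ∈ Icc (0:ℝ) 1 := ⟨le_csSup hSb hS0, csSup_le ⟨0, hS0⟩ fun s hs => hs.1.2⟩
  have key : ∀ s ∈ Icc (0:ℝ) 1, g s * P s ≤ m * g s + g c * (P s - m) := by
    intro s hs
    have : (g s - g c) * (P s - m) ≤ 0 := by
      rcases le_or_gt c s with h | h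
      · rcases h.eq_or_lt with h | h
        · rw [← h]; simp
        · have : P s ≤ m := by
            by_contra hh
            exact absurd (le_csSup hSb (show s ∈ S from ⟨hs, by linarith⟩)) (not_le.2 h)
          exact mul_nonpos_of_nonneg_of_nonpos (by linarith [hg hc hs h.le]) (by linarith)
      · obtain ⟨t, ht, hst⟩ := exists_lt_of_lt_csSup ⟨0, hS0⟩ h
        have a := hP hs ht.1 hst.le
        exact mul_nonpos_of_nonpos_of_nonneg (by linarith [hg hs hc h.le]) (by linarith [ht.2])
    linarith
  have hr1 : IntervalIntegrable (fun s => m * g s) volume 0 1 := hgi.const_mul m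
  have hr2 : IntervalIntegrable (fun s => P s - m) volume 0 1 :=
    hPi.sub intervalIntegrable_const
  have hr3 : IntervalIntegrable (fun s => g c * (P s - m)) volume 0 1 := hr2.const_mul _
  have := intervalIntegral.integral_mono_on zero_le_one hgP (hr1.add hr3) key
  rw [intervalIntegral.integral_add hr1 hr3, intervalIntegral.integral_const_mul,
    intervalIntegral.integral_const_mul,
    intervalIntegral.integral_sub hPi intervalIntegrable_const, ← hm] at this
  simp at this
  linarith

/-- If the quantile virtual surplus `g̃` is nondecreasing with
`∫₀¹ g̃ ≥ 0`, then the random-allocation rule `P̂ ≡ 1/n` is feasible and maximizes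
`∫₀¹ g̃ P` over all feasible `P`. -/
theorem stmt_8 (n : ℕ) (hn : 2 ≤ n)
    (gt : ℝ → ℝ) (hgt_meas : Measurable gt)
    (hgt_bdd : ∃ C, ∀ s ∈ Icc (0:ℝ) 1, |gt s| ≤ C)
    (hgt_mono : MonotoneOn gt (Icc (0:ℝ) 1))
    (hgt_int : 0 ≤ ∫ s in (0:ℝ)..1, gt s) :
    Feasible n (fun _ => 1 / (n : ℝ)) ∧
      ∀ P : ℝ → ℝ, Feasible n P →
        (∫ s in (0:ℝ)..1, gt s * P s) ≤ ∫ s in (0:ℝ)..1, gt s * (1 / (n : ℝ)) := by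
  have hn0 : (0:ℝ) < n := by exact_mod_cast (by omega : 0 < n)
  have hn1 : (1:ℝ) ≤ n := by exact_mod_cast (by omega : 1 ≤ n)
  refine ⟨⟨fun s _ => ⟨by positivity, ?_⟩, fun _ _ _ _ _ => le_rfl, fun x hx => ?_⟩, ?_⟩
  · exact (div_le_one hn0).2 hn1
  · rw [pow_integral n hn, intervalIntegral.integral_const]
    have : (1 - x) ^ n ≤ 1 - x :=
      pow_le_of_le_one (by linarith [hx.2]) (by linarith [hx.1]) (by omega)
    rw [smul_eq_mul, mul_one_div]
    exact div_le_div_of_nonneg_right (by linarith) hn0.le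
  · intro P hP
    refine (chebyshev_aux gt P hgt_mono hP.2.1).trans ?_
    rw [intervalIntegral.integral_mul_const]
    refine mul_le_mul_of_nonneg_left ?_ hgt_int
    refine (hP.2.2 1 (by simp)).trans ?_
    rw [pow_integral n hn, sub_self, zero_pow (by omega), sub_zero]
end

section
/- Let n ≥ 2 and let g̃ : [0,1] → ℝ be a bounded measurable single-dipped function, i.e., there exists m ∈ [0,1] such that g̃ is nonincreasing on [0,m] and nondecreasing on [m,1]. Then there exist 0 ≤ a ≤ S ≤ 1 such that the function P̂ defined by P̂(s) = (1−s)^{n−1} for s ∈ [0,a), P̂(s) = (1/(S−a))∫_a^S (1−t)^{n−1} dt for s ∈ [a, S] (this case being vacuous if a = S), and P̂(s) = 0 for s ∈ (S, 1], is feasible and maximizes ∫_0^1 g̃(s) P(s) ds over all feasible P. -/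
open MeasureTheory Set

lemma layer_int (p M : ℝ) (h0 : 0 ≤ p) (hM : p ≤ M) :
    ∫ t in Ioc 0 M, (if t < p then (1:ℝ) else 0) = p := by
  have : (fun t : ℝ => if t < p then (1:ℝ) else 0) = (Iio p).indicator (fun _ => 1) := by
    ext t; simp [indicator]
  rw [this, integral_indicator measurableSet_Iio, Measure.restrict_restrict measurableSet_Iio]
  have : Iio p ∩ Ioc 0 M = Ioo 0 p := by
    ext t; simp only [mem_inter_iff, mem_Iio, mem_Ioc, mem_Ioo]
    constructor
    · rintro ⟨h1, h2, h3⟩; exact ⟨h2, h1⟩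
    · rintro ⟨h1, h2⟩; exact ⟨h2, h1, by linarith⟩
  rw [this]
  simp [h0]

lemma abel_aux (a b : ℝ) (hab : a ≤ b) (f P : ℝ → ℝ) (hf : IntervalIntegrable f volume a b)
    (hP : Antitone P) (M : ℝ) (h0 : ∀ s, 0 ≤ P s) (hM : ∀ s, P s ≤ M)
    (hle : ∀ x ∈ Icc a b, ∫ t in a..x, f t ≤ 0) :
    ∫ t in a..b, f t * P t ≤ 0 := by
  rw [intervalIntegral.integral_of_le hab]
  have hfi : IntegrableOn f (Ioc a b) volume := (intervalIntegrable_iff_integrableOn_Ioc_of_le hab).1 hf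
  have e1 : ∫ s in Ioc a b, f s * P s =
      ∫ s in Ioc a b, ∫ t in Ioc 0 M, f s * (if t < P s then (1:ℝ) else 0) := by
    congr 1; ext s
    rw [integral_const_mul, layer_int _ _ (h0 s) (hM s)]
  rw [e1, integral_integral_swap]
  · apply integral_nonpos
    intro t
    simp only [Pi.zero_apply]
    set A := {s | s ∈ Icc a b ∧ t < P s} with hA
    by_cases hne : A.Nonempty
    · have hbd : BddAbove A := ⟨b, fun s hs => hs.1.2⟩
      set x := sSup A with hx
      obtain ⟨s0, hs0⟩ := hne
      have hxa : a ≤ x := hs0.1.1.trans (le_csSup hbd hs0)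
      have hxb : x ≤ b := csSup_le ⟨s0, hs0⟩ (fun s hs => hs.1.2)
      have hx' := hle x ⟨hxa, hxb⟩
      have : ∫ s in Ioc a b, f s * (if t < P s then (1:ℝ) else 0)
          = ∫ s in Ioc a b, (Iio x).indicator f s := by
        apply integral_congr_ae
        have hnx : ∀ᵐ s ∂(volume.restrict (Ioc a b)), s ≠ x :=
          ae_restrict_of_ae (by simp [ae_iff])
        filter_upwards [hnx, ae_restrict_mem measurableSet_Ioc] with s hs hsm
        rcases lt_or_gt_of_ne hs with h | h
        · obtain ⟨s', hs', hlt⟩ := exists_lt_of_lt_csSup ⟨s0, hs0⟩ h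
          have : t < P s := lt_of_lt_of_le hs'.2 (hP hlt.le)
          simp [this, h]
        · have : ¬ t < P s := fun hh => absurd (le_csSup hbd (show s ∈ A from ⟨⟨hsm.1.le, hsm.2⟩, hh⟩)) (not_le.2 h)
          simp [this, h.le]
      rw [this, integral_indicator measurableSet_Iio, Measure.restrict_restrict measurableSet_Iio]
      have e : Iio x ∩ Ioc a b = Ioo a x := by
        ext s; simp only [mem_inter_iff, mem_Iio, mem_Ioc, mem_Ioo]
        constructor
        · rintro ⟨h1, h2, h3⟩; exact ⟨h2, h1⟩
        · rintro ⟨h1, h2⟩; exact ⟨h2, h1, by linarith⟩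
      rw [e, ← integral_Ioc_eq_integral_Ioo, ← intervalIntegral.integral_of_le hxa]
      exact hx'
    · have : ∫ s in Ioc a b, f s * (if t < P s then (1:ℝ) else 0) = ∫ s in Ioc a b, (0:ℝ) := by
        apply setIntegral_congr_fun measurableSet_Ioc
        intro s hs
        have : ¬ t < P s := fun hh => hne ⟨s, ⟨hs.1.le, hs.2⟩, hh⟩
        simp [this]
      rw [this]; simp
  · have hPm : Measurable P := hP.measurable
    have h1 : Integrable (fun z : ℝ × ℝ => f z.1) ((volume.restrict (Ioc a b)).prod (volume.restrict (Ioc 0 M))) :=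
      Integrable.comp_fst hfi _
    have hms : MeasurableSet {z : ℝ × ℝ | z.2 < P z.1} :=
      measurableSet_lt measurable_snd (hPm.comp measurable_fst)
    have := h1.indicator hms
    refine this.congr (Filter.Eventually.of_forall fun z => ?_)
    simp [Function.uncurry, indicator]

lemma abel (a b : ℝ) (hab : a ≤ b) (f P : ℝ → ℝ) (hf : IntervalIntegrable f volume a b)
    (hP : AntitoneOn P (Icc a b)) (h0 : ∀ s ∈ Icc a b, 0 ≤ P s)
    (hle : ∀ x ∈ Icc a b, ∫ t in a..x, f t ≤ 0) :
    ∫ t in a..b, f t * P t ≤ 0 := by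
  have hmem : ∀ s, max a (min b s) ∈ Icc a b := fun s =>
    ⟨le_max_left _ _, max_le hab (min_le_left _ _)⟩
  have := abel_aux a b hab f (fun s => P (max a (min b s))) hf
    (fun s t hst => hP (hmem _) (hmem _) (by gcongr)) (P a)
    (fun s => h0 _ (hmem s)) (fun s => hP ⟨le_rfl, hab⟩ (hmem s) (hmem s).1) hle
  convert this using 1
  apply intervalIntegral.integral_congr
  intro s hs
  rw [uIcc_of_le hab] at hs
  simp [hs.1, hs.2]

lemma mono_ii {f : ℝ → ℝ} (hf : IntervalIntegrable f volume 0 1) {x y : ℝ}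
    (hx : x ∈ Icc (0:ℝ) 1) (hy : y ∈ Icc (0:ℝ) 1) : IntervalIntegrable f volume x y := by
  apply hf.mono_set
  rw [uIcc_of_le zero_le_one]
  exact uIcc_subset_Icc hx hy

lemma tangent (g : ℝ → ℝ) (hg : IntervalIntegrable g volume 0 1) (m : ℝ) (hm : m ∈ Icc (0:ℝ) 1)
    (hmono : MonotoneOn g (Icc m 1)) :
    ∃ c a : ℝ, 0 ≤ c ∧ a ∈ Icc 0 m ∧ (∀ x ∈ Icc (0:ℝ) 1, ∫ t in a..x, g t ≤ c * (x - a)) ∧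
      (c = 0 ∨ ∫ t in a..1, g t = c * (1 - a)) := by
  obtain ⟨hm0, hm1⟩ := hm
  set G : ℝ → ℝ := fun x => ∫ t in (0:ℝ)..x, g t with hG
  have z0 : (0:ℝ) ∈ Icc (0:ℝ) 1 := by simp
  have z1 : (1:ℝ) ∈ Icc (0:ℝ) 1 := by simp
  have hsub : Icc 0 m ⊆ Icc (0:ℝ) 1 := Icc_subset_Icc le_rfl hm1
  have hGd : ∀ x ∈ Icc (0:ℝ) 1, ∀ y ∈ Icc (0:ℝ) 1, ∫ t in x..y, g t = G y - G x := by
    intro x hx y hy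
    rw [hG]; simp only
    rw [intervalIntegral.integral_interval_sub_left (mono_ii hg z0 hy) (mono_ii hg z0 hx)]
  have hGc : ContinuousOn G (Icc 0 1) := by
    have := intervalIntegral.continuousOn_primitive_interval (f := g) (μ := volume) (a := 0) (b := 1)
      ((intervalIntegrable_iff' (by simp)).1 hg)
    rwa [uIcc_of_le zero_le_one] at this
  have hG0 : G 0 = 0 := by simp [hG]
  -- the compact set
  set K : Set (ℝ × ℝ) := (Icc 0 |G 1| ×ˢ Icc 0 m) ∩ {z | 0 ≤ G z.2 - G 1 + z.1 * (1 - z.2)} with hK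
  have hcont : ContinuousOn (fun z : ℝ × ℝ => G z.2 - G 1 + z.1 * (1 - z.2)) (Icc 0 |G 1| ×ˢ Icc 0 m) := by
    apply ContinuousOn.add
    · apply ContinuousOn.sub _ continuousOn_const
      exact hGc.comp continuousOn_snd (fun z hz => hsub hz.2)
    · fun_prop
  have hKc : IsCompact K := by
    have hc : IsCompact (Icc (0:ℝ) |G 1| ×ˢ Icc (0:ℝ) m) := isCompact_Icc.prod isCompact_Icc
    have := hcont.preimage_isClosed_of_isClosed hc.isClosed isClosed_Ici (t := Ici (0:ℝ))
    exact hc.of_isClosed_subset this inter_subset_left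
  have hKn : K.Nonempty := by
    refine ⟨(|G 1|, 0), ⟨⟨by simp, by simp [hm0]⟩, ?_⟩⟩
    simp only [mem_ofPred_eq, hG0]
    linarith [le_abs_self (G 1)]
  obtain ⟨⟨c, a0⟩, hz, hmin⟩ := hKc.exists_isMinOn hKn continuousOn_fst
  have hc0 : 0 ≤ c := hz.1.1.1
  have hcC : c ≤ |G 1| := hz.1.1.2
  have hFc : ContinuousOn (fun x => G x - c * x) (Icc 0 m) :=
    (hGc.mono hsub).sub (by fun_prop)
  obtain ⟨a, ha, hmax⟩ := isCompact_Icc.exists_isMaxOn ⟨0, by simp [hm0]⟩ hFc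
  have hmax' : ∀ x ∈ Icc 0 m, G x - c * x ≤ G a - c * a := fun x hx => hmax hx
  have ha1 : G 1 - c ≤ G a - c * a := by
    have h1 := hmax' a0 hz.1.2
    have h2 : 0 ≤ G a0 - G 1 + c * (1 - a0) := hz.2
    linarith
  refine ⟨c, a, hc0, ha, ?_, ?_⟩
  · intro x hx
    rw [hGd a (hsub ha) x hx]
    suffices G x - c * x ≤ G a - c * a by linarith
    rcases le_total x m with h | h
    · exact hmax' x ⟨hx.1, h⟩
    rcases le_total (g x) c with h' | h'
    · have hb : ∫ t in m..x, g t ≤ ∫ t in m..x, c := by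
        apply intervalIntegral.integral_mono_on h (mono_ii hg ⟨hm0, hm1⟩ hx) (by simp)
        intro t ht
        exact (hmono ⟨ht.1, ht.2.trans hx.2⟩ ⟨h, hx.2⟩ ht.2).trans h'
      rw [hGd m ⟨hm0, hm1⟩ x hx] at hb
      simp only [intervalIntegral.integral_const, smul_eq_mul] at hb
      have := hmax' m ⟨hm0, le_rfl⟩
      linarith
    · have hb : ∫ t in x..1, c ≤ ∫ t in x..1, g t := by
        apply intervalIntegral.integral_mono_on hx.2 (by simp) (mono_ii hg hx z1)
        intro t ht
        exact h'.trans (hmono ⟨h, hx.2⟩ ⟨h.trans ht.1, ht.2⟩ ht.1)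
      rw [hGd x hx 1 z1] at hb
      simp only [intervalIntegral.integral_const, smul_eq_mul] at hb
      linarith
  · rcases hc0.eq_or_lt with h | h
    · exact Or.inl h.symm
    right
    rw [hGd a (hsub ha) 1 z1]
    by_contra hne
    have hlt : 0 < G a - G 1 + c * (1 - a) := by
      rcases lt_or_gt_of_ne hne with h' | h' <;> linarith
    set δ := min c (G a - G 1 + c * (1 - a)) with hδ
    have hδ0 : 0 < δ := lt_min h hlt
    have hδ1 : δ ≤ c := min_le_left _ _
    have hδ2 : δ ≤ G a - G 1 + c * (1 - a) := min_le_right _ _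
    have : (c - δ, a) ∈ K := by
      refine ⟨⟨⟨by simp only; linarith, by simp only; linarith⟩, ha⟩, ?_⟩
      simp only [mem_ofPred_eq]
      nlinarith [ha.1]
    have := hmin this
    simp only [mem_ofPred_eq] at this
    linarith

lemma above (g : ℝ → ℝ) (hg : IntervalIntegrable g volume 0 1) (m : ℝ) (hm : m ∈ Icc (0:ℝ) 1)
    (hanti : AntitoneOn g (Icc 0 m)) (c a : ℝ) (ha : a ∈ Icc 0 m)
    (h : ∀ x ∈ Icc (0:ℝ) 1, ∫ t in a..x, g t ≤ c * (x - a)) : ∀ s ∈ Ico 0 a, c ≤ g s := by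
  intro s hs
  by_contra! hlt
  have hs1 : s ∈ Icc (0:ℝ) 1 := ⟨hs.1, by linarith [hs.2, ha.2, hm.2]⟩
  have h1 := h s hs1
  rw [intervalIntegral.integral_symm] at h1
  have hb : ∫ t in s..a, g t ≤ ∫ t in s..a, g s := by
    apply intervalIntegral.integral_mono_on hs.2.le (mono_ii hg hs1 ⟨ha.1, ha.2.trans hm.2⟩) (by simp)
    intro t ht
    exact hanti ⟨hs.1, by linarith [hs.2, ha.2]⟩ ⟨hs.1.trans ht.1, ht.2.trans ha.2⟩ ht.1
  simp only [intervalIntegral.integral_const, smul_eq_mul] at hb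
  nlinarith [hs.2]

lemma mul_ii {g P : ℝ → ℝ} (hg : IntervalIntegrable g volume 0 1)
    (hP : AntitoneOn P (Icc (0:ℝ) 1)) (hb : ∀ s ∈ Icc (0:ℝ) 1, P s ∈ Icc (0:ℝ) 1) :
    IntervalIntegrable (fun s => g s * P s) volume 0 1 := by
  have hPi : IntervalIntegrable P volume 0 1 := by
    apply AntitoneOn.intervalIntegrable
    rwa [uIcc_of_le zero_le_one]
  rw [intervalIntegrable_iff_integrableOn_Ioc_of_le zero_le_one] at hg hPi ⊢
  apply Integrable.mul_bdd (c := 1) hg hPi.aestronglyMeasurable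
  filter_upwards [ae_restrict_mem measurableSet_Ioc] with s hs
  have := hb s ⟨hs.1.le, hs.2⟩
  rw [Real.norm_eq_abs, abs_le]
  exact ⟨by linarith [this.1], this.2⟩

lemma anti_ii {P : ℝ → ℝ} (hP : AntitoneOn P (Icc (0:ℝ) 1)) : IntervalIntegrable P volume 0 1 := by
  apply AntitoneOn.intervalIntegrable
  rwa [uIcc_of_le zero_le_one]

lemma upper (g P Q : ℝ → ℝ) (hg : IntervalIntegrable g volume 0 1)
    (m : ℝ) (hm : m ∈ Icc (0:ℝ) 1) (hanti : AntitoneOn g (Icc 0 m))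
    (c a : ℝ) (hc : 0 ≤ c) (ha : a ∈ Icc 0 m)
    (h : ∀ x ∈ Icc (0:ℝ) 1, ∫ t in a..x, g t ≤ c * (x - a))
    (hP : AntitoneOn P (Icc (0:ℝ) 1)) (hPb : ∀ s ∈ Icc (0:ℝ) 1, P s ∈ Icc (0:ℝ) 1)
    (hQ : AntitoneOn Q (Icc (0:ℝ) 1)) (hQb : ∀ s ∈ Icc (0:ℝ) 1, Q s ∈ Icc (0:ℝ) 1)
    (hPQ : ∀ x ∈ Icc (0:ℝ) 1, (∫ t in (0:ℝ)..x, P t) ≤ ∫ t in (0:ℝ)..x, Q t) :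
    ∫ s in (0:ℝ)..1, g s * P s ≤ (∫ s in (0:ℝ)..a, g s * Q s) + c * ∫ s in a..1, Q s := by
  have z0 : (0:ℝ) ∈ Icc (0:ℝ) 1 := by simp
  have z1 : (1:ℝ) ∈ Icc (0:ℝ) 1 := by simp
  have ha1 : a ∈ Icc (0:ℝ) 1 := ⟨ha.1, ha.2.trans hm.2⟩
  have habove := above g hg m hm hanti c a ha h
  have igP := mul_ii hg hP hPb
  have igQ := mul_ii hg hQ hQb
  have iP := anti_ii hP
  have iQ := anti_ii hQ
  -- first step: replace g by c on [a,1]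
  have s1 : ∫ t in a..1, (g t - c) * P t ≤ 0 := by
    apply abel a 1 ha1.2
    · exact (mono_ii hg ha1 z1).sub (by simp)
    · exact hP.mono (Icc_subset_Icc ha1.1 le_rfl)
    · intro s hs; exact (hPb s ⟨ha1.1.trans hs.1, hs.2⟩).1
    · intro x hx
      have hx1 : x ∈ Icc (0:ℝ) 1 := ⟨ha1.1.trans hx.1, hx.2⟩
      rw [intervalIntegral.integral_sub (mono_ii hg ha1 hx1) (by simp)]
      have := h x hx1
      simp only [intervalIntegral.integral_const, smul_eq_mul]
      linarith
  have s1' : ∫ t in a..1, (g t - c) * P t = (∫ t in a..1, g t * P t) - c * ∫ t in a..1, P t := by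
    rw [← intervalIntegral.integral_const_mul, ← intervalIntegral.integral_sub (mono_ii igP ha1 z1)
      ((mono_ii iP ha1 z1).const_mul c)]
    congr 1; ext t; ring
  -- second step
  set H : ℝ → ℝ := fun s => if s < a then g s else c with hH
  have e1 : EqOn (fun t => g t * P t - g t * Q t) (fun t => (P t - Q t) * H t) (uIoo 0 a) := by
    intro t ht
    rw [uIoo_of_le ha1.1] at ht
    simp only [hH, ht.2, if_true]; ring
  have e2 : EqOn (fun t => c * P t - c * Q t) (fun t => (P t - Q t) * H t) (uIoo a 1) := by
    intro t ht
    rw [uIoo_of_le ha1.2] at ht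
    simp only [hH, not_lt.2 ht.1.le, if_false]; ring
  have i1 := (mono_ii igP z0 ha1).sub (mono_ii igQ z0 ha1)
  have i2 := ((mono_ii iP ha1 z1).const_mul c).sub ((mono_ii iQ ha1 z1).const_mul c)
  have s2 : ∫ t in (0:ℝ)..1, (P t - Q t) * H t ≤ 0 := by
    apply abel 0 1 zero_le_one
    · exact iP.sub iQ
    · intro s hs t ht hst
      simp only [hH]
      by_cases h1 : t < a
      · have h2 : s < a := lt_of_le_of_lt hst h1
        simp only [h1, h2, if_true]
        exact hanti ⟨hs.1, by linarith [ha.2]⟩ ⟨ht.1, by linarith [ha.2]⟩ hst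
      · by_cases h2 : s < a
        · simp only [h1, h2, if_true, if_false]; exact habove s ⟨hs.1, h2⟩
        · simp only [h1, h2, if_false]; exact le_rfl
    · intro s hs
      simp only [hH]
      split_ifs with h1
      · exact hc.trans (habove s ⟨hs.1, h1⟩)
      · exact hc
    · intro x hx
      rw [intervalIntegral.integral_sub (mono_ii iP z0 hx) (mono_ii iQ z0 hx)]
      linarith [hPQ x hx]
  rw [← intervalIntegral.integral_add_adjacent_intervals (i1.congr_uIoo e1) (i2.congr_uIoo e2),
    ← intervalIntegral.integral_congr_uIoo e1, ← intervalIntegral.integral_congr_uIoo e2,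
    intervalIntegral.integral_sub (mono_ii igP z0 ha1) (mono_ii igQ z0 ha1),
    intervalIntegral.integral_sub ((mono_ii iP ha1 z1).const_mul c) ((mono_ii iQ ha1 z1).const_mul c),
    intervalIntegral.integral_const_mul, intervalIntegral.integral_const_mul] at s2
  rw [← intervalIntegral.integral_add_adjacent_intervals (mono_ii igP z0 ha1) (mono_ii igP ha1 z1)]
  linarith

lemma Rint (g Q : ℝ → ℝ) (hg : IntervalIntegrable g volume 0 1)
    (hQ : AntitoneOn Q (Icc (0:ℝ) 1)) (hQb : ∀ s ∈ Icc (0:ℝ) 1, Q s ∈ Icc (0:ℝ) 1)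
    (a v x : ℝ) (ha : a ∈ Icc (0:ℝ) 1) (hx : x ∈ Icc a 1) :
    ∫ s in (0:ℝ)..x, g s * (if s < a then Q s else v)
      = (∫ s in (0:ℝ)..a, g s * Q s) + v * ∫ s in a..x, g s := by
  have z0 : (0:ℝ) ∈ Icc (0:ℝ) 1 := by simp
  have hx1 : x ∈ Icc (0:ℝ) 1 := ⟨ha.1.trans hx.1, hx.2⟩
  have e1 : EqOn (fun t => g t * Q t) (fun s => g s * (if s < a then Q s else v)) (uIoo 0 a) := by
    intro t ht
    rw [uIoo_of_le ha.1] at ht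
    simp only [ht.2, if_true]
  have e2 : EqOn (fun t => v * g t) (fun s => g s * (if s < a then Q s else v)) (uIoo a x) := by
    intro t ht
    rw [uIoo_of_le hx.1] at ht
    simp only [not_lt.2 ht.1.le, if_false]; ring
  have i1 := mono_ii (mul_ii hg hQ hQb) z0 ha
  have i2 := (mono_ii hg ha hx1).const_mul v
  rw [← intervalIntegral.integral_add_adjacent_intervals (i1.congr_uIoo e1) (i2.congr_uIoo e2),
    ← intervalIntegral.integral_congr_uIoo e1, ← intervalIntegral.integral_congr_uIoo e2,
    intervalIntegral.integral_const_mul]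

lemma Rfeas (n : ℕ) (Q : ℝ → ℝ) (hQe : Q = fun t => (1 - t) ^ (n - 1))
    (hQ : AntitoneOn Q (Icc (0:ℝ) 1)) (hQb : ∀ s ∈ Icc (0:ℝ) 1, Q s ∈ Icc (0:ℝ) 1)
    (a v : ℝ) (ha : a ∈ Icc (0:ℝ) 1) (hv0 : 0 ≤ v) (hv1 : v ≤ Q a)
    (hv : ∀ x ∈ Icc a 1, v * (x - a) ≤ ∫ t in a..x, Q t) :
    Feasible n (fun s => if s < a then Q s else v) := by
  have z0 : (0:ℝ) ∈ Icc (0:ℝ) 1 := by simp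
  refine ⟨?_, ?_, ?_⟩
  · intro s hs
    simp only
    split_ifs
    · exact hQb s hs
    · exact ⟨hv0, hv1.trans (hQb a ha).2⟩
  · intro s hs t ht hst
    by_cases h1 : t < a
    · have h2 : s < a := lt_of_le_of_lt hst h1
      simp only [h1, h2, if_true]
      exact hQ hs ht hst
    · by_cases h2 : s < a
      · simp only [h1, h2, if_true, if_false]
        exact hv1.trans (hQ hs ha h2.le)
      · simp only [h1, h2, if_false]; exact le_rfl
  · intro x hx
    have e : ∫ t in (0:ℝ)..x, (1 - t) ^ (n - 1) = ∫ t in (0:ℝ)..x, Q t := by rw [hQe]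
    rw [e]
    rcases le_total x a with h | h
    · apply le_of_eq
      apply intervalIntegral.integral_congr_uIoo
      intro t ht
      rw [uIoo_of_le hx.1] at ht
      simp only [lt_of_lt_of_le ht.2 h, if_true]
    · have := Rint (fun _ => 1) Q (by simp) hQ hQb a v x ha ⟨h, hx.2⟩
      simp only [one_mul, intervalIntegral.integral_const, smul_eq_mul, mul_one] at this
      rw [this, ← intervalIntegral.integral_add_adjacent_intervals (mono_ii (anti_ii hQ) z0 ha)
        (mono_ii (anti_ii hQ) ha hx)]
      linarith [hv x ⟨h, hx.2⟩]

/-- If the quantile virtual surplus `g̃` is single-dipped, then an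
allocation that follows `(1−s)^{n−1}` on `[0,a)`, pools on `[a,S]`, and excludes
`(S,1]` is feasible and maximizes `∫₀¹ g̃ P` over all feasible `P`. -/
theorem stmt_10 (n : ℕ) (hn : 2 ≤ n)
    (gt : ℝ → ℝ) (hgt_meas : Measurable gt)
    (hgt_bdd : ∃ C, ∀ s ∈ Icc (0:ℝ) 1, |gt s| ≤ C)
    (m : ℝ) (hm : m ∈ Icc (0:ℝ) 1)
    (hgt_anti : AntitoneOn gt (Icc (0:ℝ) m))
    (hgt_mono : MonotoneOn gt (Icc m 1)) :
    ∃ a S : ℝ, ∃ Phat : ℝ → ℝ, 0 ≤ a ∧ a ≤ S ∧ S ≤ 1 ∧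
      (∀ s ∈ Ico (0:ℝ) a, Phat s = (1 - s) ^ (n - 1)) ∧
      (∀ s ∈ Icc a S, Phat s = (1 / (S - a)) * ∫ t in a..S, (1 - t) ^ (n - 1)) ∧
      (∀ s ∈ Ioc S 1, Phat s = 0) ∧
      Feasible n Phat ∧
      ∀ P : ℝ → ℝ, Feasible n P →
        (∫ s in (0:ℝ)..1, gt s * P s) ≤ ∫ s in (0:ℝ)..1, gt s * Phat s := by
  have z0 : (0:ℝ) ∈ Icc (0:ℝ) 1 := by simp
  have z1 : (1:ℝ) ∈ Icc (0:ℝ) 1 := by simp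
  have hg : IntervalIntegrable gt volume 0 1 := by
    obtain ⟨C, hC⟩ := hgt_bdd
    rw [intervalIntegrable_iff_integrableOn_Ioc_of_le zero_le_one]
    apply Measure.integrableOn_of_bounded (M := C) (by simp) hgt_meas.aestronglyMeasurable
    filter_upwards [ae_restrict_mem measurableSet_Ioc] with s hs
    exact hC s ⟨hs.1.le, hs.2⟩
  obtain ⟨c, a, hc, ha, htan, hor⟩ := tangent gt hg m hm hgt_mono
  have ha1 : a ∈ Icc (0:ℝ) 1 := ⟨ha.1, ha.2.trans hm.2⟩
  obtain ⟨Q, hQe⟩ : ∃ Q : ℝ → ℝ, Q = fun t => (1 - t) ^ (n - 1) := ⟨_, rfl⟩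
  have hQt : ∀ t, (1 - t) ^ (n - 1) = Q t := fun t => by rw [hQe]
  have hQ : AntitoneOn Q (Icc (0:ℝ) 1) := by
    intro s hs t ht hst
    rw [← hQt, ← hQt]
    exact pow_le_pow_left₀ (by linarith [ht.2]) (by linarith) _
  have hQb : ∀ s ∈ Icc (0:ℝ) 1, Q s ∈ Icc (0:ℝ) 1 := by
    intro s hs
    rw [← hQt]
    exact ⟨pow_nonneg (by linarith [hs.2]) _, pow_le_one₀ (by linarith [hs.2]) (by linarith [hs.1])⟩
  have iQ := anti_ii hQ
  have hup : ∀ P : ℝ → ℝ, Feasible n P → ∫ s in (0:ℝ)..1, gt s * P s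
      ≤ (∫ s in (0:ℝ)..a, gt s * Q s) + c * ∫ s in a..1, Q s := by
    intro P hP
    refine upper gt P Q hg m hm hgt_anti c a hc ha htan hP.2.1 hP.1 hQ hQb ?_
    intro x hx
    have := hP.2.2 x hx
    simpa only [hQt] using this
  have hposI : ∀ x ∈ Icc a 1, 0 ≤ ∫ t in a..x, Q t := by
    intro x hx
    apply intervalIntegral.integral_nonneg hx.1
    intro t ht
    exact (hQb t ⟨ha1.1.trans ht.1, ht.2.trans hx.2⟩).1
  simp only [hQt]
  rcases hor with h0 | h1
  · refine ⟨a, a, fun s => if s < a then Q s else 0, ha1.1, le_rfl, ha1.2, ?_, ?_, ?_, ?_, ?_⟩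
    · intro s hs; simp [hs.2]
    · intro s hs; simp [hs.1]
    · intro s hs; simp [hs.1.le]
    · apply Rfeas n Q hQe hQ hQb a 0 ha1 le_rfl (hQb a ha1).1
      intro x hx
      rw [zero_mul]
      exact hposI x hx
    · intro P hP
      rw [Rint gt Q hg hQ hQb a 0 1 ha1 ⟨ha1.2, le_rfl⟩]
      have := hup P hP
      rw [h0] at this
      linarith
  · obtain ⟨v, hv⟩ : ∃ v, v = (1 / (1 - a)) * ∫ t in a..1, Q t := ⟨_, rfl⟩
    have hI0 := hposI 1 ⟨ha1.2, le_rfl⟩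
    have hva : v * (1 - a) = ∫ t in a..1, Q t := by
      rcases ha1.2.eq_or_lt with h | h
      · rw [hv, h]; simp
      · have : (1 - a) ≠ 0 := by linarith
        rw [hv]; field_simp
    have hub : ∀ x ∈ Icc (0:ℝ) 1, ∫ t in x..1, Q t ≤ Q x * (1 - x) := by
      intro x hx
      have hb : ∫ t in x..1, Q t ≤ ∫ t in x..1, Q x := by
        apply intervalIntegral.integral_mono_on hx.2 (mono_ii iQ hx z1) (by simp)
        intro t ht
        exact hQ hx ⟨hx.1.trans ht.1, ht.2⟩ ht.1
      simp only [intervalIntegral.integral_const, smul_eq_mul] at hb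
      linarith
    have hv0 : 0 ≤ v := by
      rw [hv]
      exact mul_nonneg (one_div_nonneg.2 (by linarith [ha1.2])) hI0
    refine ⟨a, 1, fun s => if s < a then Q s else v, ha1.1, ha1.2, le_rfl, ?_, ?_, ?_, ?_, ?_⟩
    · intro s hs; simp [hs.2]
    · intro s hs; rw [← hv]; simp [hs.1]
    · intro s hs; exact absurd hs.1 (not_lt.2 hs.2)
    · apply Rfeas n Q hQe hQ hQb a v ha1 hv0
      · rcases ha1.2.eq_or_lt with h | h
        · have : v = 0 := by rw [hv, h]; simp
          rw [this]; exact (hQb a ha1).1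
        · have := hub a ha1
          rw [← hva] at this
          exact le_of_mul_le_mul_right this (by linarith)
      · intro x hx
        have hx1 : x ∈ Icc (0:ℝ) 1 := ⟨ha1.1.trans hx.1, hx.2⟩
        rcases ha1.2.eq_or_lt with h | h
        · have : v = 0 := by rw [hv, h]; simp
          rw [this, zero_mul]; exact hposI x hx
        have hsum := intervalIntegral.integral_add_adjacent_intervals (mono_ii iQ ha1 hx1) (mono_ii iQ hx1 z1)
        have h2 := hub x hx1
        have h3 : Q x * (x - a) ≤ ∫ t in a..x, Q t := by
          have hb : ∫ t in a..x, Q x ≤ ∫ t in a..x, Q t := by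
            apply intervalIntegral.integral_mono_on hx.1 (by simp) (mono_ii iQ ha1 hx1)
            intro t ht
            exact hQ ⟨ha1.1.trans ht.1, ht.2.trans hx.2⟩ hx1 ht.2
          simp only [intervalIntegral.integral_const, smul_eq_mul] at hb
          linarith
        generalize (∫ t in a..x, Q t) = I1 at *
        generalize (∫ t in x..1, Q t) = I2 at *
        rw [← hva] at hsum
        have k1 : (x - a) * I2 ≤ (x - a) * (Q x * (1 - x)) :=
          mul_le_mul_of_nonneg_left h2 (by linarith [hx.1])
        have k2 : (1 - x) * (Q x * (x - a)) ≤ (1 - x) * I1 :=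
          mul_le_mul_of_nonneg_left h3 (by linarith [hx.2])
        refine le_of_mul_le_mul_right (a := 1 - a) ?_ (by linarith)
        have k3 : v * (x - a) * (1 - a) = (x - a) * (I1 + I2) := by rw [hsum]; ring
        rw [k3]
        nlinarith
    · intro P hP
      rw [Rint gt Q hg hQ hQb a v 1 ha1 ⟨ha1.2, le_rfl⟩, h1]
      have := hup P hP
      rw [← hva] at this
      linarith
end

section
/- Let n ≥ 2, let F : [0,1] → [0,1] be twice continuously differentiable with F(0) = 0, F(1) = 1, f := F' > 0 on (0,1), and with log F and log(1−F) concave on (0,1); let v : [0,1] → ℝ be continuous with x ↦ v(x) − x strictly decreasing. Fix γ ∈ [0,1] and define g̃(s) = v(F⁻¹(s)) − F⁻¹(s) − F(F⁻¹(s))/f(F⁻¹(s)) and h̃_γ(s) = v(F⁻¹(s)) − F⁻¹(s) − γ·F(F⁻¹(s))/f(F⁻¹(s)) for s ∈ (0,1). Then there exists S₀ ∈ [0,1] such that P̂(s) = (1−s)^{n−1} for s ≤ S₀ and P̂(s) = 0 for s > S₀ is feasible, satisfies ∫_0^1 g̃(s) P̂(s) ds ≥ 0, and maximizes ∫_0^1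 h̃_γ(s) P(s) ds over all feasible P with ∫_0^1 g̃(s) P(s) ds ≥ 0. -/
open MeasureTheory Set

lemma aux_prod_int {φ R : ℝ → ℝ} {S : ℝ}
    (hφi : IntegrableOn φ (Ioo 0 S)) (hR : AntitoneOn R (Icc 0 S))
    (hR0 : ∀ s ∈ Icc (0:ℝ) S, R s ∈ Icc (0:ℝ) 1) :
    IntegrableOn (fun s => φ s * R s) (Ioo 0 S) := by
  refine Integrable.mul_bdd (c := 1) hφi
    (aemeasurable_restrict_of_antitoneOn measurableSet_Ioo
      (hR.mono Ioo_subset_Icc_self)).aestronglyMeasurable ?_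
  filter_upwards [ae_restrict_mem measurableSet_Ioo] with s hs
  have := hR0 s (Ioo_subset_Icc_self hs)
  rw [Real.norm_eq_abs, abs_of_nonneg this.1]
  exact this.2

lemma aux_layer {φ R : ℝ → ℝ} {S : ℝ} (hS : 0 ≤ S)
    (hφ : AntitoneOn φ (Ioo 0 S)) (hφ0 : ∀ s ∈ Ioo (0:ℝ) S, 0 ≤ φ s)
    (hφi : IntegrableOn φ (Ioo 0 S)) (hR : AntitoneOn R (Icc 0 S))
    (hR0 : ∀ s ∈ Icc (0:ℝ) S, R s ∈ Icc (0:ℝ) 1) :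
    ENNReal.ofReal (∫ s in (0:ℝ)..S, φ s * R s) =
      ∫⁻ t in Ioi (0:ℝ), ∫⁻ s in {a | t < φ a}, ENNReal.ofReal (R s)
        ∂(volume.restrict (Ioo 0 S)) := by
  have hi := aux_prod_int hφi hR hR0
  have hRm : AEMeasurable R (volume.restrict (Ioo 0 S)) :=
    aemeasurable_restrict_of_antitoneOn measurableSet_Ioo (hR.mono Ioo_subset_Icc_self)
  have hφm : AEMeasurable φ (volume.restrict (Ioo 0 S)) :=
    aemeasurable_restrict_of_antitoneOn measurableSet_Ioo hφ
  rw [intervalIntegral.integral_of_le hS, integral_Ioc_eq_integral_Ioo,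
    ofReal_integral_eq_lintegral_ofReal hi]
  · have hac : (volume.restrict (Ioo 0 S)).withDensity (fun s => ENNReal.ofReal (R s))
        ≪ volume.restrict (Ioo 0 S) := withDensity_absolutelyContinuous _ _
    have h1 := lintegral_eq_lintegral_meas_lt (f := φ)
      ((volume.restrict (Ioo 0 S)).withDensity (fun s => ENNReal.ofReal (R s)))
      (by
        apply hac.ae_le
        filter_upwards [ae_restrict_mem measurableSet_Ioo] with s hs
        exact hφ0 s hs)
      (hφm.mono_ac hac)
    rw [lintegral_withDensity_eq_lintegral_mul₀ hRm.ennreal_ofReal hφm.ennreal_ofReal] at h1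
    simp_rw [withDensity_apply'] at h1
    rw [← h1]
    refine setLIntegral_congr_fun measurableSet_Ioo fun s hs => ?_
    simp only [Pi.mul_apply]
    rw [ENNReal.ofReal_mul (hφ0 s hs), mul_comm]
  · filter_upwards [ae_restrict_mem measurableSet_Ioo] with s hs
    exact mul_nonneg (hφ0 s hs) (hR0 s (Ioo_subset_Icc_self hs)).1

lemma aux_initial {A : Set ℝ} {S : ℝ} (hS : 0 ≤ S) (hA : A ⊆ Ioo 0 S)
    (hd : ∀ s ∈ A, ∀ r, 0 < r → r < s → r ∈ A) :
    ∃ x ∈ Icc (0:ℝ) S, volume.restrict A = volume.restrict (Ioo 0 x) := by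
  rcases A.eq_empty_or_nonempty with rfl | hne
  · exact ⟨0, ⟨le_rfl, hS⟩, by simp⟩
  have hb : BddAbove A := ⟨S, fun a ha => (hA ha).2.le⟩
  refine ⟨sSup A, ⟨?_, csSup_le hne fun a ha => (hA ha).2.le⟩, ?_⟩
  · obtain ⟨a, ha⟩ := hne
    exact (hA ha).1.le.trans (le_csSup hb ha)
  have h1 : Ioo 0 (sSup A) ⊆ A := by
    intro r hr
    obtain ⟨a, ha, hra⟩ := exists_lt_of_lt_csSup hne hr.2
    exact hd a ha r hr.1 hra
  have h2 : A ⊆ Ioc 0 (sSup A) := fun a ha => ⟨(hA ha).1, le_csSup hb ha⟩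
  apply le_antisymm
  · rw [Measure.restrict_congr_set Ioo_ae_eq_Ioc]
    exact Measure.restrict_mono h2 le_rfl
  · exact Measure.restrict_mono h1 le_rfl

lemma aux_major {φ P Q : ℝ → ℝ} {S : ℝ} (hS : 0 ≤ S)
    (hφ : AntitoneOn φ (Ioo 0 S)) (hφ0 : ∀ s ∈ Ioo (0:ℝ) S, 0 ≤ φ s)
    (hφi : IntegrableOn φ (Ioo 0 S)) (hP : AntitoneOn P (Icc 0 S))
    (hP0 : ∀ s ∈ Icc (0:ℝ) S, P s ∈ Icc (0:ℝ) 1)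
    (hQ : AntitoneOn Q (Icc 0 S))
    (hQ0 : ∀ s ∈ Icc (0:ℝ) S, Q s ∈ Icc (0:ℝ) 1)
    (h : ∀ x ∈ Icc (0:ℝ) S, (∫ t in (0:ℝ)..x, P t) ≤ ∫ t in (0:ℝ)..x, Q t) :
    (∫ s in (0:ℝ)..S, φ s * P s) ≤ ∫ s in (0:ℝ)..S, φ s * Q s := by
  have hn : 0 ≤ ∫ s in (0:ℝ)..S, φ s * Q s := by
    rw [intervalIntegral.integral_of_le hS, integral_Ioc_eq_integral_Ioo]
    exact setIntegral_nonneg measurableSet_Ioo fun s hs =>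
      mul_nonneg (hφ0 s hs) (hQ0 s (Ioo_subset_Icc_self hs)).1
  rw [← ENNReal.ofReal_le_ofReal_iff hn, aux_layer hS hφ hφ0 hφi hP hP0,
    aux_layer hS hφ hφ0 hφi hQ hQ0]
  refine lintegral_mono fun t => ?_
  simp only
  rw [Measure.restrict_restrict' measurableSet_Ioo]
  obtain ⟨x, hx, hxe⟩ := aux_initial (A := {a | t < φ a} ∩ Ioo 0 S) hS inter_subset_right
    (fun s hs r hr hrs => ⟨lt_of_lt_of_le hs.1
      (hφ ⟨hr, hrs.trans hs.2.2⟩ hs.2 hrs.le), hr, hrs.trans hs.2.2⟩)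
  rw [hxe]
  have key : ∀ R : ℝ → ℝ, AntitoneOn R (Icc 0 S) → (∀ s ∈ Icc (0:ℝ) S, R s ∈ Icc (0:ℝ) 1) →
      ∫⁻ s in Ioo 0 x, ENNReal.ofReal (R s) = ENNReal.ofReal (∫ s in (0:ℝ)..x, R s) := by
    intro R hR hR0
    have hsub : Icc 0 x ⊆ Icc 0 S := Icc_subset_Icc_right hx.2
    rw [intervalIntegral.integral_of_le hx.1, integral_Ioc_eq_integral_Ioo,
      ofReal_integral_eq_lintegral_ofReal]
    · have : IntervalIntegrable R volume 0 x :=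
        AntitoneOn.intervalIntegrable (by rw [uIcc_of_le hx.1]; exact hR.mono hsub)
      exact (intervalIntegrable_iff_integrableOn_Ioo_of_le hx.1).1 this
    · filter_upwards [ae_restrict_mem measurableSet_Ioo] with s hs
      exact (hR0 s (hsub (Ioo_subset_Icc_self hs))).1
  rw [key P hP hP0, key Q hQ hQ0]
  exact ENNReal.ofReal_le_ofReal (h x hx)

lemma aux_Q_anti (m : ℕ) : AntitoneOn (fun s : ℝ => (1 - s) ^ m) (Icc 0 1) := by
  intro a ha b hb hab
  exact pow_le_pow_left₀ (by linarith [hb.2]) (by linarith) _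

lemma aux_Q_mem (m : ℕ) : ∀ s ∈ Icc (0:ℝ) 1, (1 - s) ^ m ∈ Icc (0:ℝ) 1 := fun s hs =>
  ⟨pow_nonneg (by linarith [hs.2]) _, pow_le_one₀ (by linarith [hs.2]) (by linarith [hs.1])⟩

/-- Pointwise bang-bang optimality for a decreasing objective. -/
lemma aux_opt {n : ℕ} {φ P : ℝ → ℝ} {S : ℝ} (hS : S ∈ Icc (0:ℝ) 1)
    (hφ : AntitoneOn φ (Ioo 0 1)) (hφi : IntegrableOn φ (Ioo 0 1))
    (hφ0 : ∀ s ∈ Ioo (0:ℝ) 1, s < S → 0 ≤ φ s) (hφ1 : ∀ s ∈ Ioo (0:ℝ) 1, S < s → φ s ≤ 0)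
    (hP : Feasible n P) :
    (∫ s in (0:ℝ)..1, φ s * P s) ≤ ∫ s in (0:ℝ)..S, φ s * (1 - s) ^ (n - 1) := by
  obtain ⟨hP0, hPa, hPm⟩ := hP
  have hi := aux_prod_int hφi hPa hP0
  have hs1 : Ioo 0 S ⊆ Ioo (0:ℝ) 1 := Ioo_subset_Ioo_right hS.2
  have hs2 : Ioo S 1 ⊆ Ioo (0:ℝ) 1 := Ioo_subset_Ioo_left hS.1
  have hs3 : Icc 0 S ⊆ Icc (0:ℝ) 1 := Icc_subset_Icc_right hS.2
  rw [← intervalIntegral.integral_add_adjacent_intervals (b := S)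
    ((intervalIntegrable_iff_integrableOn_Ioo_of_le hS.1).2 (hi.mono_set hs1))
    ((intervalIntegrable_iff_integrableOn_Ioo_of_le hS.2).2 (hi.mono_set hs2))]
  have h1 : (∫ s in (0:ℝ)..S, φ s * P s) ≤ ∫ s in (0:ℝ)..S, φ s * (1 - s) ^ (n - 1) :=
    aux_major hS.1 (hφ.mono hs1) (fun s hs => hφ0 s (hs1 hs) hs.2) (hφi.mono_set hs1)
      (hPa.mono hs3) (fun s hs => hP0 s (hs3 hs)) ((aux_Q_anti _).mono hs3)
      (fun s hs => aux_Q_mem _ s (hs3 hs)) (fun x hx => hPm x (hs3 hx))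
  have h2 : (∫ s in S..1, φ s * P s) ≤ 0 := by
    rw [intervalIntegral.integral_of_le hS.2, integral_Ioc_eq_integral_Ioo]
    exact setIntegral_nonpos measurableSet_Ioo fun s hs =>
      mul_nonpos_of_nonpos_of_nonneg (hφ1 s (hs2 hs) hs.1)
        (hP0 s (Ioo_subset_Icc_self (hs2 hs))).1
  linarith

noncomputable def auxPhat (n : ℕ) (S : ℝ) (s : ℝ) : ℝ := if s ≤ S then (1 - s) ^ (n - 1) else 0

lemma aux_Phat_feasible (n : ℕ) (S : ℝ) : Feasible n (auxPhat n S) := by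
  have ha : AntitoneOn (auxPhat n S) (Icc 0 1) := by
    intro a ha b hb hab
    unfold auxPhat
    have h1 := aux_Q_anti (n - 1) ha hb hab
    have h2 := (aux_Q_mem (n - 1) a ha).1
    simp only at h1
    split_ifs <;> linarith
  refine ⟨?_, ha, ?_⟩
  · intro s hs
    unfold auxPhat
    split_ifs
    · exact aux_Q_mem _ s hs
    · simp
  · intro x hx
    have hsub : Icc 0 x ⊆ Icc (0:ℝ) 1 := Icc_subset_Icc_right hx.2
    refine intervalIntegral.integral_mono_on hx.1
      (AntitoneOn.intervalIntegrable (by rw [uIcc_of_le hx.1]; exact ha.mono hsub))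
      (Continuous.intervalIntegrable (by fun_prop) _ _) fun s hs => ?_
    unfold auxPhat
    split_ifs
    · exact le_rfl
    · exact (aux_Q_mem _ s (hsub hs)).1

lemma aux_Phat_int {n : ℕ} {φ : ℝ → ℝ} {S : ℝ} (hS : S ∈ Icc (0:ℝ) 1)
    (hφi : IntegrableOn φ (Ioo 0 1)) :
    (∫ s in (0:ℝ)..1, φ s * auxPhat n S s) = ∫ s in (0:ℝ)..S, φ s * (1 - s) ^ (n - 1) := by
  have hf := aux_Phat_feasible n S
  have hi := aux_prod_int hφi hf.2.1 hf.1
  have hs1 : Ioo 0 S ⊆ Ioo (0:ℝ) 1 := Ioo_subset_Ioo_right hS.2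
  have hs2 : Ioo S 1 ⊆ Ioo (0:ℝ) 1 := Ioo_subset_Ioo_left hS.1
  rw [← intervalIntegral.integral_add_adjacent_intervals (b := S)
    ((intervalIntegrable_iff_integrableOn_Ioo_of_le hS.1).2 (hi.mono_set hs1))
    ((intervalIntegrable_iff_integrableOn_Ioo_of_le hS.2).2 (hi.mono_set hs2))]
  have h1 : (∫ s in S..1, φ s * auxPhat n S s) = ∫ s in S..1, (0:ℝ) := by
    refine intervalIntegral.integral_congr_Ioo_of_le hS.2 fun s hs => ?_
    simp [auxPhat, not_le.2 hs.1]
  have h2 : (∫ s in (0:ℝ)..S, φ s * auxPhat n S s) =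
      ∫ s in (0:ℝ)..S, φ s * (1 - s) ^ (n - 1) := by
    refine intervalIntegral.integral_congr_Ioo_of_le hS.1 fun s hs => ?_
    simp [auxPhat, hs.2.le]
  rw [h1, h2]; simp

lemma aux_core (n : ℕ) (g h : ℝ → ℝ) (hg : StrictAntiOn g (Ioo 0 1))
    (hh : StrictAntiOn h (Ioo 0 1)) (hgi : IntegrableOn g (Ioo 0 1))
    (hhi : IntegrableOn h (Ioo 0 1)) :
    ∃ S0 : ℝ, S0 ∈ Icc (0:ℝ) 1 ∧ 0 ≤ (∫ s in (0:ℝ)..S0, g s * (1 - s) ^ (n - 1)) ∧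
      ∀ P : ℝ → ℝ, Feasible n P → 0 ≤ (∫ s in (0:ℝ)..1, g s * P s) →
        (∫ s in (0:ℝ)..1, h s * P s) ≤ ∫ s in (0:ℝ)..S0, h s * (1 - s) ^ (n - 1) := by
  -- zero of h
  obtain ⟨Sh, hSh, hpos, hneg⟩ : ∃ Sh ∈ Icc (0:ℝ) 1, (∀ s ∈ Ioo (0:ℝ) 1, s < Sh → 0 < h s) ∧
      ∀ s ∈ Ioo (0:ℝ) 1, Sh < s → h s ≤ 0 := by
    let A : Set ℝ := insert 0 {s | s ∈ Ioo (0:ℝ) 1 ∧ 0 < h s}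
    have hb : BddAbove A := by
      refine ⟨1, ?_⟩
      rintro a (rfl | ha)
      · norm_num
      · exact ha.1.2.le
    have h0 : (0:ℝ) ∈ A := mem_insert _ _
    refine ⟨sSup A, ⟨le_csSup hb h0, csSup_le ⟨0, h0⟩ ?_⟩, ?_, ?_⟩
    · rintro a (rfl | ha)
      · norm_num
      · exact ha.1.2.le
    · intro s hs hlt
      obtain ⟨a, ha, hsa⟩ := exists_lt_of_lt_csSup ⟨0, h0⟩ hlt
      rcases ha with rfl | ha
      · exact absurd hsa (not_lt.2 hs.1.le)
      · exact ha.2.trans (hh hs ha.1 hsa)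
    · intro s hs hlt
      by_contra hc
      exact absurd (le_csSup hb (show s ∈ A from Or.inr ⟨hs, not_le.1 hc⟩)) (not_le.2 hlt)
  have hgQ : IntegrableOn (fun s => g s * (1 - s) ^ (n - 1)) (Ioo 0 1) :=
    aux_prod_int hgi (aux_Q_anti _) (aux_Q_mem _)
  have hhQ : IntegrableOn (fun s => h s * (1 - s) ^ (n - 1)) (Ioo 0 1) :=
    aux_prod_int hhi (aux_Q_anti _) (aux_Q_mem _)
  set G : ℝ → ℝ := fun x => ∫ s in (0:ℝ)..x, g s * (1 - s) ^ (n - 1) with hG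
  have hGc : ContinuousOn G (Icc 0 1) := by
    have := intervalIntegral.continuousOn_primitive_interval (a := 0) (b := 1)
      (f := fun s => g s * (1 - s) ^ (n - 1)) (μ := volume)
      (by rw [uIcc_of_le zero_le_one, integrableOn_Icc_iff_integrableOn_Ioo]; exact hgQ)
    rwa [uIcc_of_le zero_le_one] at this
  -- positivity
  have hGpos : ∀ x ∈ Ioc (0:ℝ) 1, (∀ s ∈ Ioo 0 x, 0 < g s) → 0 < G x := by
    intro x hx hgx
    refine intervalIntegral.intervalIntegral_pos_of_pos_on ?_ ?_ hx.1
    · exact (intervalIntegrable_iff_integrableOn_Ioo_of_le hx.1.le).2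
        (hgQ.mono_set (Ioo_subset_Ioo_right hx.2))
    · intro s hs
      exact mul_pos (hgx s hs) (pow_pos (by linarith [hs.2, hx.2]) _)
  have hG0 : G 0 = 0 := by simp [hG]
  obtain ⟨S0, ⟨hS0, hGS0⟩, hmax⟩ : ∃ S0, (S0 ∈ Icc 0 Sh ∧ 0 ≤ G S0) ∧
      ∀ x ∈ Icc 0 Sh, 0 ≤ G x → x ≤ S0 := by
    have hcl : IsCompact (Icc 0 Sh ∩ G ⁻¹' (Ici 0)) :=
      isCompact_Icc.of_isClosed_subset
        ((hGc.mono (Icc_subset_Icc_right hSh.2)).preimage_isClosed_of_isClosed isClosed_Icc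
          isClosed_Ici) inter_subset_left
    obtain ⟨S0, hm, hS⟩ := hcl.exists_isGreatest ⟨0, ⟨le_rfl, hSh.1⟩, hG0.ge⟩
    exact ⟨S0, hm, fun x hx hxG => hS ⟨hx, hxG⟩⟩
  have hS01 : S0 ∈ Icc (0:ℝ) 1 := ⟨hS0.1, hS0.2.trans hSh.2⟩
  refine ⟨S0, hS01, hGS0, fun P hP hPg => ?_⟩
  rcases hS0.2.eq_or_lt with heq | hlt
  · subst heq
    exact aux_opt hS01 hh.antitoneOn hhi (fun s hs hl => (hpos s hs hl).le) hneg hP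
  have hGneg : ∀ x ∈ Ioc S0 Sh, G x < 0 := by
    intro x hx
    by_contra hc
    exact absurd (hmax x ⟨hS0.1.trans hx.1.le, hx.2⟩ (not_lt.1 hc)) (not_le.2 hx.1)
  have hgP := aux_prod_int hgi hP.2.1 hP.1
  have hhP := aux_prod_int hhi hP.2.1 hP.1
  rcases hS0.1.eq_or_lt with h0 | h0
  · -- g negative everywhere, so P vanishes a.e.
    subst h0
    have hgn : ∀ s ∈ Ioo (0:ℝ) 1, g s < 0 := by
      intro s hs
      by_contra hc
      have hm : 0 < min s Sh := lt_min hs.1 hlt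
      have := hGpos (min s Sh) ⟨hm, (min_le_left _ _).trans hs.2.le⟩ (fun r hr => by
        have hrs : r < s := hr.2.trans_le (min_le_left _ _)
        exact (not_lt.1 hc).trans_lt (hg ⟨hr.1, hrs.trans hs.2⟩ hs hrs))
      linarith [hGneg (min s Sh) ⟨hm, min_le_right _ _⟩]
    have hle : (∫ s in Ioo (0:ℝ) 1, -(g s * P s)) = 0 := by
      apply le_antisymm
      · rw [integral_neg]
        rw [intervalIntegral.integral_of_le zero_le_one, integral_Ioc_eq_integral_Ioo] at hPg
        linarith
      · exact setIntegral_nonneg measurableSet_Ioo fun s hs => by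
          nlinarith [hgn s hs, (hP.1 s (Ioo_subset_Icc_self hs)).1]
    have hgPn : IntegrableOn (fun s => -(g s * P s)) (Ioo 0 1) := hgP.neg
    rw [setIntegral_eq_zero_iff_of_nonneg_ae _ hgPn] at hle
    · have : (∫ s in (0:ℝ)..1, h s * P s) = 0 := by
        rw [intervalIntegral.integral_of_le zero_le_one, integral_Ioc_eq_integral_Ioo]
        apply integral_eq_zero_of_ae
        filter_upwards [hle, ae_restrict_mem measurableSet_Ioo] with s h1 hs
        have h2 := hgn s hs
        simp only [Pi.zero_apply, neg_eq_zero, mul_eq_zero] at h1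
        rcases h1 with h1 | h1
        · exact absurd h1 h2.ne
        · simp [h1]
      simp [this]
    · filter_upwards [ae_restrict_mem measurableSet_Ioo] with s hs
      simp only [Pi.zero_apply]
      nlinarith [hgn s hs, (hP.1 s (Ioo_subset_Icc_self hs)).1]
  · have hS0i : S0 ∈ Ioo (0:ℝ) 1 := ⟨h0, hlt.trans_le hSh.2⟩
    have hGle : G S0 ≤ 0 := by
      have hc : ContinuousWithinAt G (Ioo S0 Sh) S0 :=
        (hGc S0 hS01).mono fun x hx => ⟨h0.le.trans hx.1.le, hx.2.le.trans hSh.2⟩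
      have : (nhdsWithin S0 (Ioo S0 Sh)).NeBot := left_nhdsWithin_Ioo_neBot hlt
      refine le_of_tendsto hc ?_
      filter_upwards [self_mem_nhdsWithin] with x hx
      exact (hGneg x ⟨hx.1, hx.2.le⟩).le
    have hgneg : g S0 < 0 := by
      by_contra hc
      have := hGpos S0 ⟨h0, hS01.2⟩ (fun r hr =>
        (not_lt.1 hc).trans_lt (hg ⟨hr.1, hr.2.trans hS0i.2⟩ hS0i hr.2))
      linarith
    have hhpos := hpos S0 hS0i hlt
    set l : ℝ := h S0 / (-g S0) with hl
    have hl0 : 0 ≤ l := div_nonneg hhpos.le (by linarith)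
    have hz : h S0 + l * g S0 = 0 := by
      rw [hl]; field_simp [hgneg.ne]; ring
    have ha : AntitoneOn (fun s => h s + l * g s) (Ioo 0 1) := by
      intro a ha b hb hab
      have h1 := hh.antitoneOn ha hb hab
      have h2 := mul_le_mul_of_nonneg_left (hg.antitoneOn ha hb hab) hl0
      simp only
      linarith
    have hopt := aux_opt (n := n) (φ := fun s => h s + l * g s) hS01 ha (hhi.add (hgi.const_mul l))
      (fun s hs hl => by have := ha hs hS0i hl.le; simp only at this ⊢; linarith)
      (fun s hs hl => by have := ha hS0i hs hl.le; simp only at this ⊢; linarith) hP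
    have e : ∀ (x : ℝ) (R : ℝ → ℝ), x ∈ Icc (0:ℝ) 1 →
        IntegrableOn (fun s => h s * R s) (Ioo 0 1) → IntegrableOn (fun s => g s * R s) (Ioo 0 1) →
        (∫ s in (0:ℝ)..x, (h s + l * g s) * R s) =
          (∫ s in (0:ℝ)..x, h s * R s) + l * ∫ s in (0:ℝ)..x, g s * R s := by
      intro x R hx i1 i2
      have hs1 : Ioo 0 x ⊆ Ioo (0:ℝ) 1 := Ioo_subset_Ioo_right hx.2
      rw [← intervalIntegral.integral_const_mul, ← intervalIntegral.integral_add
        ((intervalIntegrable_iff_integrableOn_Ioo_of_le hx.1).2 (i1.mono_set hs1))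
        (((intervalIntegrable_iff_integrableOn_Ioo_of_le hx.1).2 (i2.mono_set hs1)).const_mul l)]
      congr 1
      ext s
      ring
    rw [e 1 P ⟨zero_le_one, le_rfl⟩ hhP hgP, e S0 (fun s => (1 - s) ^ (n - 1)) hS01 hhQ hgQ] at hopt
    have h3 := mul_nonneg hl0 hPg
    have h4 := mul_nonpos_of_nonneg_of_nonpos hl0 hGle
    simp only [hG] at h4
    linarith

theorem stmt_14 (n : ℕ) (hn : 2 ≤ n)
    (F : ℝ → ℝ)
    (hF : ContDiffOn ℝ 2 F (Icc (0:ℝ) 1))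
    (hF0 : F 0 = 0) (hF1 : F 1 = 1)
    (hf_pos : ∀ x ∈ Ioo (0:ℝ) 1, 0 < deriv F x)
    (hlogF : ConcaveOn ℝ (Ioo (0:ℝ) 1) fun x => Real.log (F x))
    (hlog1F : ConcaveOn ℝ (Ioo (0:ℝ) 1) fun x => Real.log (1 - F x))
    (v : ℝ → ℝ) (hv : ContinuousOn v (Icc (0:ℝ) 1))
    (hvx : StrictAntiOn (fun x => v x - x) (Icc (0:ℝ) 1))
    (γ : ℝ) (hγ : γ ∈ Icc (0:ℝ) 1)
    (Finv : ℝ → ℝ)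
    (hFinv : ∀ s ∈ Ioo (0:ℝ) 1, Finv s ∈ Ioo (0:ℝ) 1 ∧ F (Finv s) = s)
    (gt ht : ℝ → ℝ)
    (hgt : ∀ s ∈ Ioo (0:ℝ) 1,
      gt s = v (Finv s) - Finv s - F (Finv s) / deriv F (Finv s))
    (hht : ∀ s ∈ Ioo (0:ℝ) 1,
      ht s = v (Finv s) - Finv s - γ * (F (Finv s) / deriv F (Finv s))) :
    ∃ S0 : ℝ, S0 ∈ Icc (0:ℝ) 1 ∧ ∃ Phat : ℝ → ℝ,
      (∀ s ∈ Icc (0:ℝ) 1,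
        (s ≤ S0 → Phat s = (1 - s) ^ (n - 1)) ∧ (S0 < s → Phat s = 0)) ∧
      Feasible n Phat ∧
      0 ≤ (∫ s in (0:ℝ)..1, gt s * Phat s) ∧
      ∀ P : ℝ → ℝ, Feasible n P → 0 ≤ (∫ s in (0:ℝ)..1, gt s * P s) →
        (∫ s in (0:ℝ)..1, ht s * P s) ≤ ∫ s in (0:ℝ)..1, ht s * Phat s := by
  have hFc : ContinuousOn F (Icc 0 1) := hF.continuousOn
  have hFm : StrictMonoOn F (Icc 0 1) :=
    strictMonoOn_of_deriv_pos (convex_Icc 0 1) hFc (by rw [interior_Icc]; exact hf_pos)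
  have hsub : Ioo (0:ℝ) 1 ⊆ Icc 0 1 := Ioo_subset_Icc_self
  have hFd : ∀ x ∈ Ioo (0:ℝ) 1, HasDerivAt F (deriv F x) x := by
    intro x hx
    exact (differentiableAt_of_deriv_ne_zero (hf_pos x hx).ne').hasDerivAt
  have hFmem : ∀ x ∈ Ioo (0:ℝ) 1, F x ∈ Ioo (0:ℝ) 1 := by
    intro x hx
    have h1 := hFm (left_mem_Icc.2 zero_le_one) (hsub hx) hx.1
    have h2 := hFm (hsub hx) (right_mem_Icc.2 zero_le_one) hx.2
    rw [hF0] at h1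
    rw [hF1] at h2
    exact ⟨h1, h2⟩
  have hleft : ∀ x ∈ Ioo (0:ℝ) 1, Finv (F x) = x := by
    intro x hx
    have := hFinv _ (hFmem x hx)
    exact hFm.injOn (hsub this.1) (hsub hx) this.2
  have himg : F '' Ioo (0:ℝ) 1 = Ioo 0 1 := by
    ext s
    constructor
    · rintro ⟨x, hx, rfl⟩
      exact hFmem x hx
    · intro hs
      exact ⟨Finv s, (hFinv s hs).1, (hFinv s hs).2⟩
  have hFinvm : StrictMonoOn Finv (Ioo 0 1) := by
    intro a ha b hb hab
    by_contra hc
    have := hFm.monotoneOn (hsub (hFinv b hb).1) (hsub (hFinv a ha).1) (not_lt.1 hc)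
    rw [(hFinv a ha).2, (hFinv b hb).2] at this
    linarith
  have hk : MonotoneOn (fun x => F x / deriv F x) (Ioo 0 1) := by
    have hld : ∀ x ∈ Ioo (0:ℝ) 1, HasDerivAt (fun x => Real.log (F x)) (deriv F x / F x) x :=
      fun x hx => (hFd x hx).log (hFmem x hx).1.ne'
    have ha := hlogF.antitoneOn_deriv (fun x hx => (hld x hx).differentiableAt)
    intro a haa b hb hab
    have h1 := ha haa hb hab
    rw [(hld a haa).deriv, (hld b hb).deriv] at h1
    have h2 := inv_anti₀ (div_pos (hf_pos b hb) (hFmem b hb).1) h1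
    simpa only [inv_div] using h2
  have hki : IntegrableOn (fun s => F (Finv s) / deriv F (Finv s)) (Ioo 0 1) := by
    have := integrableOn_image_iff_integrableOn_abs_deriv_smul (f := F) (f' := deriv F)
      (s := Ioo (0:ℝ) 1) measurableSet_Ioo (fun x hx => (hFd x hx).hasDerivWithinAt)
      (hFm.injOn.mono hsub) (fun s => F (Finv s) / deriv F (Finv s))
    rw [himg] at this
    rw [this]
    have hi : IntegrableOn F (Ioo 0 1) := (hFc.integrableOn_Icc).mono_set hsub
    refine hi.congr_fun (fun x hx => ?_) measurableSet_Ioo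
    simp only [smul_eq_mul]
    rw [hleft x hx, abs_of_pos (hf_pos x hx)]
    field_simp [(hf_pos x hx).ne']
  have hwa : StrictAntiOn (fun s => v (Finv s) - Finv s) (Ioo 0 1) := by
    intro a ha b hb hab
    exact hvx (hsub (hFinv a ha).1) (hsub (hFinv b hb).1) (hFinvm ha hb hab)
  have hwi : IntegrableOn (fun s => v (Finv s) - Finv s) (Ioo 0 1) := by
    have hcw : ContinuousOn (fun x => v x - x) (Icc (0:ℝ) 1) := hv.sub continuousOn_id
    obtain ⟨C, hC⟩ := isCompact_Icc.exists_bound_of_continuousOn hcw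
    refine Integrable.of_bound (C := C)
      (aemeasurable_restrict_of_antitoneOn measurableSet_Ioo hwa.antitoneOn).aestronglyMeasurable
      ?_
    filter_upwards [ae_restrict_mem measurableSet_Ioo] with s hs
    exact hC _ (hsub (hFinv s hs).1)
  have hkm : MonotoneOn (fun s => F (Finv s) / deriv F (Finv s)) (Ioo 0 1) := by
    intro a ha b hb hab
    exact hk (hFinv a ha).1 (hFinv b hb).1 (hFinvm.monotoneOn ha hb hab)
  have hga : StrictAntiOn gt (Ioo 0 1) := by
    intro a ha b hb hab
    have h1 := hwa ha hb hab
    have h2 := hkm ha hb hab.le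
    simp only at h1 h2
    rw [hgt a ha, hgt b hb]
    linarith
  have hha : StrictAntiOn ht (Ioo 0 1) := by
    intro a ha b hb hab
    have h1 := hwa ha hb hab
    have h2 := mul_le_mul_of_nonneg_left (hkm ha hb hab.le) hγ.1
    simp only at h1 h2
    rw [hht a ha, hht b hb]
    linarith
  have hgi : IntegrableOn gt (Ioo 0 1) :=
    (hwi.sub hki).congr_fun (fun s hs => (hgt s hs).symm) measurableSet_Ioo
  have hhi : IntegrableOn ht (Ioo 0 1) :=
    (hwi.sub (hki.const_mul γ)).congr_fun (fun s hs => (hht s hs).symm) measurableSet_Ioo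
  obtain ⟨S0, hS0, h1, h2⟩ := aux_core n gt ht hga hha hgi hhi
  refine ⟨S0, hS0, auxPhat n S0, ?_, aux_Phat_feasible n S0, ?_, ?_⟩
  · intro s _
    exact ⟨fun h => by simp [auxPhat, h], fun h => by simp [auxPhat, not_le.2 h]⟩
  · rwa [aux_Phat_int hS0 hgi]
  · intro P hP hPg
    rw [aux_Phat_int hS0 hhi]
    exact h2 P hP hPg
end
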